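/- arXiv:0904.2407 — 3 statements merged into one kernel-verified Lean document; each statement's English description precedes it below -/
import Mathlib

section
/- Let n ≥ 2 and lambda = (lambda_1 > ... > lambda_n > 0) a strict partition. Let sigma in F(lambda) satisfy: (1) all primed columns of each block coincide with the corresponding unprimed first column, i.e. C'_{i,2} = C'_{i,3} = ... = C'_{i,lambda'_i} = C_{i,1} for all i; and (2) for all i and j, the column C_{i,j+1} differs from C_{i,j} only in position j (i.e. p = 0 in all column transitions). Let sigma-tilde be the filling of the Young diagram of lambda whose k-th column from the right is C_{k,1}, for k = 1,...,lambda_1. Then N(sigma) = cinv(sigma-tilde) and des(sigma) = des(sigma-tilde). -/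
/-!
A column of the filling and its right neighbour differ in at most one position, and the entries of
a column are pairwise different up to sign.  In that situation the case-by-case definition of
`N(D,C)` and `des(D,C)` leaves no choice: a nonempty product of reflections `(r_1,-j)⋯(r_p,-j)`,
even after changing position `j` once more, alters both positions `r_1` and `j`
(`NdesCand_single`, `stat_step`).

Write `A = C_{i,1}` and `B = C_{i-1,1}`.  The primed columns of the block are copies of `A` and
contribute nothing, and `C_{i,j}` consists of the first `j-1` entries of `B` followed by the
remaining entries of `A`.  Hence the transitions from `A` to `B` contribute the number of rows with
`B(j) ≺ A(j)` to `des`, and `#{j < l : B(j) ≺ A(l) ≺ A(j)}` to `N` (`BlockSeq.sum_stat`).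

It remains to compare the latter with complementary inversions.  For rows `j < l` of `A`,
`[B(l) ≺ B(j)] + [B(j) ≺ A(l) ≺ A(j)] = [A(l) ≺ A(j)] + [B(l) ≺ B(j) ≺ A(l)]`, because rows weakly
decrease and `B(j) ≠ A(l)`, both entries lying in the column `C_{i,j+1}` (`pair_identity`).  Summing
over all pairs gives `ℓ₊(B) + blockN A B = ℓ₊(A) + pairCinv A B` (`lplus_add_blockN`), which
telescopes over the blocks: `ℓ₊` of the leftmost column is its own number of complementary
inversions, and `ℓ₊` of the rightmost column is the correction term of `N(σ)` (`main_induction`).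
-/

open scoped BigOperators

namespace HL

/-! ### The order `≺` on nonzero integers in `[-n,n]`:
`1 ≺ 2 ≺ ... ≺ n ≺ -n ≺ -(n-1) ≺ ... ≺ -1`. -/

def slt (a b : ℤ) : Prop :=
  (0 < a ∧ b < 0) ∨ (0 < a ∧ 0 < b ∧ a < b) ∨ (a < 0 ∧ b < 0 ∧ a < b)

instance slt.dec (a b : ℤ) : Decidable (slt a b) := by unfold slt; infer_instance

def sle (a b : ℤ) : Prop := slt a b ∨ a = b

instance sle.dec (a b : ℤ) : Decidable (sle a b) := by unfold sle; infer_instance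

/-! ### Signed permutations (windows), reflections acting on the right -/

/-- The right action of a reflection on a window (or column), with 1-based
positions.  The reflection `(i, j)` with `j > 0` transposes positions `i` and
`j`; the reflection `(i, -j)` (i.e. `(i,\bar\jmath)`) with `i ≠ j` transposes
positions `i, j` and negates both entries; `(i, -i)` negates position `i`. -/
def applyRefl (l : List ℤ) (t : ℕ × ℤ) : List ℤ :=
  if 0 < t.2 then
    (l.set (t.1 - 1) (l.getD (t.2.toNat - 1) 0)).set (t.2.toNat - 1) (l.getD (t.1 - 1) 0)
  else
    if t.1 = (-t.2).toNat then l.set (t.1 - 1) (-(l.getD (t.1 - 1) 0))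
    else (l.set (t.1 - 1) (-(l.getD ((-t.2).toNat - 1) 0))).set ((-t.2).toNat - 1)
          (-(l.getD (t.1 - 1) 0))

def applyAll (w : List ℤ) (T : List (ℕ × ℤ)) : List ℤ := T.foldl applyRefl w

/-- The word `w[i,j] = w(i) w(i+1) ... w(j)`, 1-based and inclusive. -/
def word (l : List ℤ) (i j : ℕ) : List ℤ := (l.drop (i - 1)).take (j + 1 - i)

/-- `N_{ab}(u)` = number of letters `c` of the word `u` with `a ≺ c ≺ b`. -/
def Nab (a b : ℤ) (u : List ℤ) : ℕ :=
  (u.filter (fun c => decide (slt a c ∧ slt c b))).length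

/-- `ℓ₊(w) = #{(k,l) : k < l, w(k) ≻ w(l)}`. -/
def lplus (l : List ℤ) : ℕ :=
  (((Finset.range l.length) ×ˢ (Finset.range l.length)).filter
    (fun p => p.1 < p.2 ∧ slt (l.getD p.2 0) (l.getD p.1 0))).card

/-- `ℓ₋(w) = #{(k,l) : k ≤ l, w(k) ≻ -w(l)}`. -/
def lminus (l : List ℤ) : ℕ :=
  (((Finset.range l.length) ×ˢ (Finset.range l.length)).filter
    (fun p => p.1 ≤ p.2 ∧ slt (-(l.getD p.2 0)) (l.getD p.1 0))).card

/-- The Coxeter length of a signed permutation given by its window. -/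
def len (l : List ℤ) : ℕ := lplus l + lminus l

/-- The (finite) set of windows of all signed permutations in `B_n`. -/
def allWindows (n : ℕ) : Finset (List ℤ) :=
  Finset.image (fun w : Equiv.Perm (Fin n) × (Fin n → Bool) =>
    (List.finRange n).map (fun i =>
      if w.2 i then -(((w.1 i : ℕ) : ℤ) + 1) else ((w.1 i : ℕ) : ℤ) + 1)) Finset.univ

/-- `w`-admissibility of a sequence of reflections: a strictly decreasing
chain in Bruhat order (recorded via the length function). -/
def decChain : List ℤ → List (ℕ × ℤ) → Bool
  | _, [] => true
  | w, t :: ts => (decide (len (applyRefl w t) < len w)) && decChain (applyRefl w t) ts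

/-- Increasing-admissibility: a strictly increasing chain. -/
def incChain : List ℤ → List (ℕ × ℤ) → Bool
  | _, [] => true
  | w, t :: ts => (decide (len w < len (applyRefl w t))) && incChain (applyRefl w t) ts

/-- The subsequence of a chain `Γ` selected by a set `J` of (0-based) positions. -/
def selChain (Γ : List (ℕ × ℤ)) (J : Finset ℕ) : List (ℕ × ℤ) :=
  (J.sort (· ≤ ·)).map (fun j => Γ.getD j (0, 0))

/-! ### The `λ`-chain of type `C_n` -/

/-- `Γ'_j = ((1,-j),(2,-j),...,(j-1,-j))`. -/
def gammaPrime (j : ℕ) : List (ℕ × ℤ) := (List.range (j - 1)).map (fun r => (r + 1, -(j : ℤ)))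

/-- `Γ_j(k) = ((1,-j),...,(j-1,-j),(j,-(k+1)),...,(j,-n),(j,-j),(j,n),...,(j,k+1))`. -/
def gammaJK (n j k : ℕ) : List (ℕ × ℤ) :=
  gammaPrime j
    ++ (List.range (n - k)).map (fun r => (j, -((k + 1 + r : ℕ) : ℤ)))
    ++ [(j, -(j : ℤ))]
    ++ (List.range (n - k)).map (fun r => (j, ((n - r : ℕ) : ℤ)))

/-- `Γ(k) = Γ'_2 ⋯ Γ'_k Γ_1(k) ⋯ Γ_k(k)` (type `C_n`). -/
def gammaChain (n k : ℕ) : List (ℕ × ℤ) :=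
  ((List.range (k - 1)).map (fun r => gammaPrime (r + 2))).flatten
    ++ ((List.range k).map (fun r => gammaJK n (r + 1) k)).flatten

/-- `λ'_i = #{j : λ_j ≥ i}`, the conjugate partition. -/
def conj (n : ℕ) (lam : Fin n → ℕ) (i : ℕ) : ℕ :=
  (Finset.univ.filter (fun j : Fin n => i ≤ lam j)).card

/-- `λ_1`, the largest part. -/
def lamOne (n : ℕ) (lam : Fin n → ℕ) : ℕ := Finset.univ.sup lam

/-- The fixed `λ`-chain `Γ = Γ^{λ_1} Γ^{λ_1-1} ⋯ Γ^1` with `Γ^i = Γ(λ'_i)`. -/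
def lambdaChain (n : ℕ) (lam : Fin n → ℕ) : List (ℕ × ℤ) :=
  ((List.range (lamOne n lam)).map
    (fun r => gammaChain n (conj n lam (lamOne n lam - r)))).flatten

/-- The set `A(λ)` of admissible pairs `(w, J)`. -/
def ASet (n : ℕ) (lam : Fin n → ℕ) : Set (List ℤ × Finset ℕ) :=
  {p | p.1 ∈ allWindows n ∧ p.2 ⊆ Finset.range (lambdaChain n lam).length ∧
    decChain p.1 (selChain (lambdaChain n lam) p.2) = true}

/-! ### Roots, coroots, affine reflections, and the weight `μ(T)` -/

/-- The root of type `C_n` corresponding to a symbol: `(i,j) ↦ ε_i - ε_j`,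
`(i,-j) ↦ ε_i + ε_j` for `i < j`, and `(i,-i) ↦ 2ε_i`. -/
def rootVec (n : ℕ) (β : ℕ × ℤ) : Fin n → ℤ := fun r =>
  (if ((r : ℕ) + 1 : ℤ) = (β.1 : ℤ) then 1 else 0) +
  (if 0 < β.2 then (if ((r : ℕ) + 1 : ℤ) = β.2 then -1 else 0)
   else (if ((r : ℕ) + 1 : ℤ) = -β.2 then 1 else 0))

/-- The coroot (type `C_n`): `(2ε_i)^∨ = ε_i`, the long rootss are unchanged. -/
def corootVec (n : ℕ) (β : ℕ × ℤ) : Fin n → ℤ :=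
  if β.2 = -(β.1 : ℤ) then (fun r => if ((r : ℕ) + 1 : ℤ) = (β.1 : ℤ) then 1 else 0)
  else rootVec n β

/-- Standard inner product on `ℤ^n`. -/
def ip (n : ℕ) (u v : Fin n → ℤ) : ℤ := ∑ r, u r * v r

/-- The affine reflection in the hyperplane `{v : ⟨v, β^∨⟩ = c}`. -/
def affRefl (n : ℕ) (β : ℕ × ℤ) (c : ℤ) (v : Fin n → ℤ) : Fin n → ℤ :=
  fun r => v r - (ip n v (corootVec n β) - c) * rootVec n β r

/-- `l_k = #{j ≤ k : β_j = β_k}` (here `k` is 0-based). -/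
def lCount (Γ : List (ℕ × ℤ)) (k : ℕ) : ℕ := (Γ.take (k + 1)).count (Γ.getD k (0, 0))

/-- `μ(J) = \hat r_{j_1} ⋯ \hat r_{j_s}(λ)` for `J = {j_1 < ... < j_s}`. -/
def muJ (n : ℕ) (Γ : List (ℕ × ℤ)) (lamVec : Fin n → ℤ) (J : Finset ℕ) : Fin n → ℤ :=
  (J.sort (· ≤ ·)).foldr (fun j v => affRefl n (Γ.getD j (0, 0)) ((lCount Γ j : ℕ) : ℤ) v) lamVec

/-- The linear action of a signed permutation (given by its window) on `ℤ^n`: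
`w(ε_i) = ε_{w(i)}` with `ε_{-i} = -ε_i`. -/
def wAct (n : ℕ) (w : List ℤ) (v : Fin n → ℤ) : Fin n → ℤ := fun r =>
  ∑ i : Fin n, ((if w.getD i 0 = ((r : ℕ) + 1 : ℤ) then v i else 0) +
    (if w.getD i 0 = -(((r : ℕ) + 1 : ℤ)) then -(v i) else 0))

def lamVec (n : ℕ) (lam : Fin n → ℕ) : Fin n → ℤ := fun i => (lam i : ℤ)

/-! ### Fillings of the doubled shape `\hat λ` -/

/-- A filling of the doubled shape, recorded by its primed columns `C'_{i,k}`
(`Cp i k`) and unprimed columns `C_{i,j}` (`Cu i j`). -/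
structure Filling where
  Cp : ℕ → ℕ → List ℤ
  Cu : ℕ → ℕ → List ℤ

def validP (n : ℕ) (lam : Fin n → ℕ) (i k : ℕ) : Prop :=
  1 ≤ i ∧ i ≤ lamOne n lam ∧ 2 ≤ k ∧ k ≤ conj n lam i

def validU (n : ℕ) (lam : Fin n → ℕ) (i j : ℕ) : Prop :=
  1 ≤ i ∧ i ≤ lamOne n lam ∧ 1 ≤ j ∧ j ≤ conj n lam i ∧ (i = 1 → j = 1)

instance validP.dec (n : ℕ) (lam : Fin n → ℕ) (i k : ℕ) : Decidable (validP n lam i k) := by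
  unfold validP; infer_instance

instance validU.dec (n : ℕ) (lam : Fin n → ℕ) (i j : ℕ) : Decidable (validU n lam i j) := by
  unfold validU; infer_instance

/-- The right neighbour `C'_{i,k+1}` of `C'_{i,k}`, with the convention
`C'_{i,λ'_i+1} = C_{i,1}`. -/
def CpNxt (n : ℕ) (lam : Fin n → ℕ) (F : Filling) (i k : ℕ) : List ℤ :=
  if k < conj n lam i then F.Cp i (k + 1) else F.Cu i 1

/-- The right neighbour `C_{i,j+1}` of `C_{i,j}`, with the conventions
`C_{i,λ'_i+1} = C'_{i-1,2}` (if `λ'_{i-1} > 1`) and `C_{i,λ'_i+1} = C_{i-1,1}`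
(if `λ'_{i-1} = 1`). -/
def CuNxt (n : ℕ) (lam : Fin n → ℕ) (F : Filling) (i j : ℕ) : List ℤ :=
  if j < conj n lam i then F.Cu i (j + 1)
  else if 2 ≤ conj n lam (i - 1) then F.Cp (i - 1) 2 else F.Cu (i - 1) 1

/-- No two entries `a, b` of a column with `a = ±b`. -/
def colDistinct (c : List ℤ) : Prop :=
  ∀ p q : ℕ, p < q → q < c.length →
    c.getD p 0 ≠ c.getD q 0 ∧ c.getD p 0 ≠ -(c.getD q 0)

/-- `R = (r_1 < r_2 < ... < r_p)` with `1 ≤ r_t < j ≤ d`. -/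
def sortedR (R : List ℕ) (j d : ℕ) : Prop :=
  List.Chain' (· < ·) R ∧ (∀ r ∈ R, 1 ≤ r ∧ r < j) ∧ 1 ≤ j ∧ j ≤ d

/-- `D (r_1,-j) (r_2,-j) ⋯ (r_p,-j)`. -/
def cycleApply (D : List ℤ) (R : List ℕ) (j : ℕ) : List ℤ :=
  R.foldl (fun E r => applyRefl E (r, -(j : ℤ))) D

/-- The relation between `C_{i,j+1}[1,λ'_i] = E` and `C_{i,j} = D` in a filling:
`E` differs from `D' = D(r_1,-j)⋯(r_p,-j)` only in position `j`,
`E(j) ∉ {±D'(r) : r ≠ j}` and `E(j) ⪯ D'(j)`. -/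
def unprimedTrans (D E : List ℤ) (R : List ℕ) (j d : ℕ) : Prop :=
  (∀ r, 1 ≤ r → r ≤ d → r ≠ j →
    E.getD (r - 1) 0 = (cycleApply D R j).getD (r - 1) 0) ∧
  (∀ r, 1 ≤ r → r ≤ d → r ≠ j →
    E.getD (j - 1) 0 ≠ (cycleApply D R j).getD (r - 1) 0 ∧
    E.getD (j - 1) 0 ≠ -((cycleApply D R j).getD (r - 1) 0)) ∧
  sle (E.getD (j - 1) 0) ((cycleApply D R j).getD (j - 1) 0)

/-- The set `F(λ)` of fillings of the doubled shape `\hat λ`. -/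
def FSet (n : ℕ) (lam : Fin n → ℕ) : Set Filling :=
  {F |
    -- shape
    (∀ i k, (validP n lam i k → (F.Cp i k).length = conj n lam i) ∧
      (¬ validP n lam i k → F.Cp i k = [])) ∧
    (∀ i j, (validU n lam i j → (F.Cu i j).length = conj n lam i) ∧
      (¬ validU n lam i j → F.Cu i j = [])) ∧
    -- entries lie in `{±1, ..., ±n}`
    (∀ i k, validP n lam i k → ∀ a ∈ F.Cp i k, 1 ≤ a.natAbs ∧ a.natAbs ≤ n) ∧
    (∀ i j, validU n lam i j → ∀ a ∈ F.Cu i j, 1 ≤ a.natAbs ∧ a.natAbs ≤ n) ∧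
    -- (1) rows weakly decrease from left to right
    (∀ i k, validP n lam i k → ∀ r, 1 ≤ r → r ≤ conj n lam i →
      sle ((CpNxt n lam F i k).getD (r - 1) 0) ((F.Cp i k).getD (r - 1) 0)) ∧
    (∀ i j, 2 ≤ i → validU n lam i j → ∀ r, 1 ≤ r → r ≤ conj n lam i →
      sle ((CuNxt n lam F i j).getD (r - 1) 0) ((F.Cu i j).getD (r - 1) 0)) ∧
    -- (2) no column contains `a, b` with `a = ±b`
    (∀ i k, validP n lam i k → colDistinct (F.Cp i k)) ∧
    (∀ i j, validU n lam i j → colDistinct (F.Cu i j)) ∧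
    -- (3) primed transitions: `C'_{i,k+1} = C'_{i,k}(r_1,-k)⋯(r_p,-k)`
    (∀ i k, validP n lam i k → ∃ R : List ℕ, sortedR R k (conj n lam i) ∧
      CpNxt n lam F i k = cycleApply (F.Cp i k) R k) ∧
    -- (3) unprimed transitions
    (∀ i j, 2 ≤ i → validU n lam i j → ∃ R : List ℕ, sortedR R j (conj n lam i) ∧
      unprimedTrans (F.Cu i j) ((CuNxt n lam F i j).take (conj n lam i)) R j (conj n lam i))}

/-! ### The filling map `f` -/

/-- Offset in `Γ` of the beginning of block `Γ^i` (the blocks are listed for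
`i = λ_1` down to `1`). -/
def offsetBlock (n : ℕ) (lam : Fin n → ℕ) (i : ℕ) : ℕ :=
  ∑ r ∈ Finset.Ico (i + 1) (lamOne n lam + 1), (gammaChain n (conj n lam r)).length

/-- Offset in `Γ` of the beginning of the factor `Γ'_{i,k}`.-/
def offsetP (n : ℕ) (lam : Fin n → ℕ) (i k : ℕ) : ℕ :=
  offsetBlock n lam i + ∑ j ∈ Finset.Ico 2 k, (gammaPrime j).length

/-- Offset in `Γ` of the beginning of the factor `Γ_{i,j}`.-/
def offsetU (n : ℕ) (lam : Fin n → ℕ) (i j : ℕ) : ℕ :=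
  offsetBlock n lam i + (∑ k ∈ Finset.Ico 2 (conj n lam i + 1), (gammaPrime k).length)
    + ∑ j' ∈ Finset.Ico 1 j, (gammaJK n j' (conj n lam i)).length

/-- `π = w ⋅ (all selected reflections at positions < off)`. -/
def piW (n : ℕ) (lam : Fin n → ℕ) (w : List ℤ) (J : Finset ℕ) (off : ℕ) : List ℤ :=
  applyAll w (selChain (lambdaChain n lam) (J.filter (fun x => x < off)))

/-- The filling map `f`, sending an (admissible) pair `(w, J)` to a filling of
the doubled shape `\hat λ`. -/
def fMap (n : ℕ) (lam : Fin n → ℕ) (w : List ℤ) (J : Finset ℕ) : Filling where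
  Cp := fun i k => if validP n lam i k
    then (piW n lam w J (offsetP n lam i k)).take (conj n lam i) else []
  Cu := fun i j => if validU n lam i j
    then (piW n lam w J (offsetU n lam i j)).take (conj n lam i) else []

/-! ### Content of a filling -/

/-- The columns `\bar{C}^i = C'_{i,2} C_{i,1}` (left to right, `i = λ_1, ..., 1`)
of the compressed filling `\barσ` of shape `2λ`; by the conventions,
`C'_{i,2} = C_{i,1}` when `λ'_i = 1`. -/
def compCols (n : ℕ) (lam : Fin n → ℕ) (F : Filling) : List (List ℤ) :=
  ((List.range (lamOne n lam)).map (fun t =>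
    [(if 2 ≤ conj n lam (lamOne n lam - t) then F.Cp (lamOne n lam - t) 2
      else F.Cu (lamOne n lam - t) 1), F.Cu (lamOne n lam - t) 1])).flatten

/-- The content of a list of columns: the `i`-th coordinate is half the
difference between the numbers of occurrences of `i` and of `-i`. -/
def ctCols (n : ℕ) (cols : List (List ℤ)) : Fin n → ℚ := fun r =>
  ((cols.flatten.count (((r : ℕ) + 1 : ℕ) : ℤ) : ℚ) -
    (cols.flatten.count (-(((r : ℕ) + 1 : ℕ) : ℤ)) : ℚ)) / 2

/-- The content `ct(σ)` of a filling `σ` of `\hatλ`. -/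
def ctQ (n : ℕ) (lam : Fin n → ℕ) (F : Filling) : Fin n → ℚ :=
  ctCols n (compCols n lam F)

/-! ### The statistics `N(D,C)` and `des(D,C)` -/

/-- `σ_{ab} = 1` if `a` and `b` are both negative, else `0`. -/
def sigmaAB (a b : ℤ) : ℕ := if a < 0 ∧ b < 0 then 1 else 0

def allEntries (n : ℕ) : List ℤ :=
  (List.range n).map (fun r => ((r + 1 : ℕ) : ℤ)) ++
    (List.range n).map (fun r => -((r + 1 : ℕ) : ℤ))

/-- Case 1: `N(D, D(r,-j)) = N_{\bar b, a}(D[r+1,j-1]) +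
#{c : \bar b ≺ c ≺ a, c ∉ ±D[1,j]} + σ_{ab}` where `a = D(r)`, `b = D(j)`. -/
def N1 (n : ℕ) (D : List ℤ) (r j : ℕ) : ℕ :=
  Nab (-(D.getD (j - 1) 0)) (D.getD (r - 1) 0) (word D (r + 1) (j - 1)) +
  ((allEntries n).filter (fun c => decide (slt (-(D.getD (j - 1) 0)) c ∧
    slt c (D.getD (r - 1) 0) ∧ c ∉ D.take j ∧ c ∉ (D.take j).map (fun x => -x)))).length +
  sigmaAB (D.getD (r - 1) 0) (D.getD (j - 1) 0)

/-- Case 2: `N(D, D(r_1,-j)⋯(r_p,-j)) = ∑ N(D_{t-1}, D_t)`. -/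
def cycleN (n : ℕ) : List ℤ → List ℕ → ℕ → ℕ
  | _, [], _ => 0
  | D, r :: rs, j => N1 n D r j + cycleN n (applyRefl D (r, -(j : ℤ))) rs j

/-- The possible values `(N(D,C), des(D,C))` arising from the case-by-case
definition of the statistics (cases 0, 2, 3; case 1 is case 2 with `p = 1`).
If `C` is one box taller than `D`, `C` is replaced by `C[1,d]`. -/
def NdesCand (n : ℕ) (D C : List ℤ) : Set (ℕ × ℕ) :=
  {x |
    (C.take D.length = D ∧ x = (0, 0)) ∨
    (∃ j R, sortedR R j D.length ∧ R ≠ [] ∧ C.take D.length = cycleApply D R j ∧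
      x = (cycleN n D R j, R.length)) ∨
    (∃ j R, sortedR R j D.length ∧
      (∀ r, 1 ≤ r → r ≤ D.length → r ≠ j →
        (C.take D.length).getD (r - 1) 0 = (cycleApply D R j).getD (r - 1) 0) ∧
      (∀ r, 1 ≤ r → r ≤ D.length → r ≠ j →
        (C.take D.length).getD (j - 1) 0 ≠ (cycleApply D R j).getD (r - 1) 0 ∧
        (C.take D.length).getD (j - 1) 0 ≠ -((cycleApply D R j).getD (r - 1) 0)) ∧
      slt ((C.take D.length).getD (j - 1) 0) ((cycleApply D R j).getD (j - 1) 0) ∧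
      x = (cycleN n D R j +
        Nab ((C.take D.length).getD (j - 1) 0) ((cycleApply D R j).getD (j - 1) 0)
          (word D (j + 1) D.length), R.length + 1))}

noncomputable def Nstat (n : ℕ) (D C : List ℤ) : ℕ :=
  sInf {v | ∃ d, (v, d) ∈ NdesCand n D C}

noncomputable def desStat (n : ℕ) (D C : List ℤ) : ℕ :=
  sInf {d | ∃ v, (v, d) ∈ NdesCand n D C}

/-- All columns of a filling of `\hatλ`, listed from left to right. -/
def colList (n : ℕ) (lam : Fin n → ℕ) (F : Filling) : List (List ℤ) :=
  ((List.range (lamOne n lam)).map (fun t =>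
    ((List.range (conj n lam (lamOne n lam - t) - 1)).map
      (fun s => F.Cp (lamOne n lam - t) (s + 2))) ++
    (if lamOne n lam - t = 1 then [F.Cu 1 1]
     else (List.range (conj n lam (lamOne n lam - t))).map
      (fun s => F.Cu (lamOne n lam - t) (s + 1))))).flatten

/-- Sum of a binary statistic over adjacent pairs of a list. -/
def adjSumN (f : List ℤ → List ℤ → ℕ) : List (List ℤ) → ℕ
  | a :: b :: rest => f a b + adjSumN f (b :: rest)
  | _ => 0

/-- `N(σ) = ∑_{i=1}^{m-1} N(C_{i+1}, C_i) + ℓ₊(C_1)`. -/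
noncomputable def Nsigma (n : ℕ) (lam : Fin n → ℕ) (F : Filling) : ℕ :=
  adjSumN (Nstat n) (colList n lam F) + lplus ((colList n lam F).getLastD [])

/-- `des(σ) = ∑_{i=1}^{m-1} des(C_{i+1}, C_i)`. -/
noncomputable def desSigma (n : ℕ) (lam : Fin n → ℕ) (F : Filling) : ℕ :=
  adjSumN (desStat n) (colList n lam F)

/-! ### Statistics on fillings of the plain shape `λ` (for Proposition 2.2) -/

/-- The descent statistic of a filling of the Young diagram of `λ`, whose
columns are listed from left to right. -/
def desTau (cols : List (List ℤ)) : ℕ :=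
  adjSumN (fun L R => ((Finset.range L.length).filter
    (fun r => slt (R.getD r 0) (L.getD r 0))).card) cols

/-- The complementary inversion statistic `cinv = n(λ) - inv` of a filling of
the Young diagram of `λ` (columns listed from left to right, `C_k` being the
`k`-th column from the right). -/
def cinvTau (cols : List (List ℤ)) : ℕ :=
  ∑ q ∈ Finset.range cols.length,
    (((Finset.range (cols.getD q []).length) ×ˢ (Finset.range (cols.getD q []).length)).filter
      (fun pp => pp.1 < pp.2 ∧
        (((1 ≤ q ∧ pp.2 < (cols.getD (q - 1) []).length) ∧
            slt ((cols.getD q []).getD pp.2 0) ((cols.getD q []).getD pp.1 0) ∧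
            slt ((cols.getD q []).getD pp.1 0) ((cols.getD (q - 1) []).getD pp.2 0)) ∨
          (¬ (1 ≤ q ∧ pp.2 < (cols.getD (q - 1) []).length) ∧
            slt ((cols.getD q []).getD pp.2 0) ((cols.getD q []).getD pp.1 0))))).card

/-! ### Chains for the root systems `C_n` and `B_n` and the conditions (R1), (R2) -/

def isPosRootC (n : ℕ) (β : ℕ × ℤ) : Prop :=
  (1 ≤ β.1 ∧ (β.1 : ℤ) < β.2 ∧ β.2 ≤ (n : ℤ)) ∨
  (1 ≤ β.1 ∧ 0 < -β.2 ∧ (β.1 : ℤ) ≤ -β.2 ∧ -β.2 ≤ (n : ℤ))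

/-- Positive roots of `B_n` use the same symbols; `(i,-i)` encodes `ε_i`. -/
def isPosRootB (n : ℕ) (β : ℕ × ℤ) : Prop := isPosRootC n β

/-- The root of type `B_n` of a symbol: as in type `C` except `(i,-i) ↦ ε_i`. -/
def rootVecB (n : ℕ) (β : ℕ × ℤ) : Fin n → ℤ :=
  if β.2 = -(β.1 : ℤ) then (fun r => if ((r : ℕ) + 1 : ℤ) = (β.1 : ℤ) then 1 else 0)
  else rootVec n β

/-- The coroot of type `B_n`: `ε_i^∨ = 2ε_i`, long roots unchanged. -/
def corootVecB (n : ℕ) (β : ℕ × ℤ) : Fin n → ℤ :=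
  if β.2 = -(β.1 : ℤ) then (fun r => if ((r : ℕ) + 1 : ℤ) = (β.1 : ℤ) then 2 else 0)
  else rootVec n β

/-- `ω_k` in type `C_n`. -/
def omegaC (n k : ℕ) : Fin n → ℤ := fun r => if (r : ℕ) + 1 ≤ k then 1 else 0

/-- `ω_k` in type `B_n` (`ω_n` is half the sum of the `ε_i`). -/
def omegaB (n k : ℕ) : Fin n → ℚ :=
  if k = n then (fun _ => 1/2) else (fun r => if (r : ℕ) + 1 ≤ k then 1 else 0)

/-- type `B`: `Γ'_j = ((1,-j),...,(j-1,-j),(j))`. -/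
def gammaPrimeB (j : ℕ) : List (ℕ × ℤ) := gammaPrime j ++ [(j, -(j : ℤ))]

/-- type `B`: `Γ(k) = Γ'_1 ⋯ Γ'_k Γ_1(k) ⋯ Γ_k(k)` for `k < n`, and
`Γ(n) = Γ'_1 ⋯ Γ'_n`. -/
def gammaChainB (n k : ℕ) : List (ℕ × ℤ) :=
  ((List.range k).map (fun r => gammaPrimeB (r + 1))).flatten
    ++ (if k = n then [] else ((List.range k).map (fun r => gammaJK n (r + 1) k)).flatten)

/-- `(R2)`: the subsequence of all occurrences of `α, β, γ` is a concatenation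
of consecutive pairs `(γ, α)` or `(γ, β)`. -/
def altPairs (g a b : ℕ × ℤ) : List (ℕ × ℤ) → Prop
  | [] => True
  | [_] => False
  | x :: y :: rest => x = g ∧ (y = a ∨ y = b) ∧ altPairs g a b rest

/-! ### Real vector space versions (for hyperplanes) -/

def ipR (n : ℕ) (u v : Fin n → ℝ) : ℝ := ∑ r, u r * v r

def affReflR (n : ℕ) (β : ℕ × ℤ) (c : ℝ) (v : Fin n → ℝ) : Fin n → ℝ :=
  fun r => v r - (ipR n v (fun s => ((corootVec n β s : ℤ) : ℝ)) - c) *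
    ((rootVec n β r : ℤ) : ℝ)

def wActR (n : ℕ) (w : List ℤ) (v : Fin n → ℝ) : Fin n → ℝ := fun r =>
  ∑ i : Fin n, ((if w.getD i 0 = ((r : ℕ) + 1 : ℤ) then v i else 0) +
    (if w.getD i 0 = -(((r : ℕ) + 1 : ℤ)) then -(v i) else 0))

/-- `γ^∨ = (2/⟨γ,γ⟩) γ`. -/
noncomputable def corootOfR (n : ℕ) (v : Fin n → ℝ) : Fin n → ℝ :=
  fun r => (2 / ipR n v v) * v r

/-- The part of the compressed filling of shape `2λ` consisting of the columns
numbered `2λ_1, 2λ_1 - 1, ..., q` (`\barσ[q]`); column `2i` is `C'_{i,2}` and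
column `2i-1` is `C_{i,1}`. -/
def compColsGe (n : ℕ) (lam : Fin n → ℕ) (F : Filling) (q : ℕ) : List (List ℤ) :=
  ((List.range (lamOne n lam)).map (fun t =>
    (if q ≤ 2 * (lamOne n lam - t) then
      [(if 2 ≤ conj n lam (lamOne n lam - t) then F.Cp (lamOne n lam - t) 2
        else F.Cu (lamOne n lam - t) 1)] else []) ++
    (if q ≤ 2 * (lamOne n lam - t) - 1 then [F.Cu (lamOne n lam - t) 1] else []))).flatten

/-! ### The chains `Δ` and `Φ` of Section 6 -/

/-- `Δ = ((1,p+1),...,(1,n),(1,-1),(1,-n),(1,-(n-1)),...,(1,-(p+1)))`. -/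
def deltaChain (n p : ℕ) : List (ℕ × ℤ) :=
  (List.range (n - p)).map (fun r => (1, ((p + 1 + r : ℕ) : ℤ)))
    ++ [(1, (-1 : ℤ))]
    ++ (List.range (n - p)).map (fun r => (1, -((n - r : ℕ) : ℤ)))

/-- The suffix `Δ_{\bar s}` of `Δ` beginning with `(1,-s)`. -/
def deltaSuffixNeg (p s : ℕ) : List (ℕ × ℤ) :=
  (List.range (s - p)).map (fun r => (1, -((s - r : ℕ) : ℤ)))

/-- The suffix `Δ_{\bar 1}` of `Δ` beginning with `(1,-1)`. -/
def deltaSuffixBar1 (n p : ℕ) : List (ℕ × ℤ) :=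
  [(1, (-1 : ℤ))] ++ (List.range (n - p)).map (fun r => (1, -((n - r : ℕ) : ℤ)))

/-- The suffix `Δ_s` of `Δ` beginning with `(1,s)` (for `p < s ≤ n`). -/
def deltaSuffixPos (n p s : ℕ) : List (ℕ × ℤ) :=
  (List.range (n + 1 - s)).map (fun r => (1, ((s + r : ℕ) : ℤ)))
    ++ [(1, (-1 : ℤ))]
    ++ (List.range (n - p)).map (fun r => (1, -((n - r : ℕ) : ℤ)))

/-- `Φ = ((1,-1),(1,-2),(2,-2),...,(1,-n),...,(n-1,-n),(n,-n))`. -/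
def phiChain (n : ℕ) : List (ℕ × ℤ) :=
  ((List.range n).map (fun jm =>
    (List.range (jm + 1)).map (fun im => (im + 1, -((jm + 1 : ℕ) : ℤ))))).flatten

/-- The suffix `Φ_{ij}` of `Φ` beginning with `(i,-j)`. -/
def phiSuffix (n i j : ℕ) : List (ℕ × ℤ) := (phiChain n).drop ((j - 1) * j / 2 + (i - 1))

/-- `ℓ^{ij}_-(w) = #{(k,l) : k ≤ l, (k,-l)` strictly precedes `(i,-j)` in `Φ`,
`w(k) ≻ -w(l)}`. -/
def lminusBefore (w : List ℤ) (i j : ℕ) : ℕ :=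
  (((Finset.range w.length) ×ˢ (Finset.range w.length)).filter
    (fun p => p.1 ≤ p.2 ∧ (p.2 + 1 < j ∨ (p.2 + 1 = j ∧ p.1 + 1 < i)) ∧
      slt (-(w.getD p.2 0)) (w.getD p.1 0))).card


/-! ### Reflections `(r_1,-j)⋯(r_p,-j)` move at least two positions -/

/-- The reflection `(r,-j)` leaves every position other than `r, j` alone. -/
lemma applyRefl_getD_of_ne (D : List ℤ) {r j s : ℕ} (hrj : r < j)
    (h1 : s ≠ r - 1) (h2 : s ≠ j - 1) :
    (applyRefl D (r, -(j : ℤ))).getD s 0 = D.getD s 0 := by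
  unfold applyRefl
  rw [if_neg (by simp), if_neg (by simp; omega)]
  simp [List.getD_eq_getElem?_getD, h1.symm, h2.symm]

lemma applyRefl_getD_left (D : List ℤ) {r j : ℕ} (hr : 1 ≤ r) (hrj : r < j)
    (hj : j ≤ D.length) :
    (applyRefl D (r, -(j : ℤ))).getD (r - 1) 0 = -D.getD (j - 1) 0 := by
  unfold applyRefl
  rw [if_neg (by simp), if_neg (by simp; omega)]
  have h1 : j - 1 ≠ r - 1 := by omega
  have h2 : r - 1 < D.length := by omega
  simp [List.getD_eq_getElem?_getD, h1, h2]

lemma applyRefl_getD_right (D : List ℤ) {r j : ℕ} (hr : 1 ≤ r) (hrj : r < j)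
    (hj : j ≤ D.length) :
    (applyRefl D (r, -(j : ℤ))).getD (j - 1) 0 = -D.getD (r - 1) 0 := by
  unfold applyRefl
  rw [if_neg (by simp), if_neg (by simp; omega)]
  have h2 : j - 1 < D.length := by omega
  simp [List.getD_eq_getElem?_getD, h2]

lemma applyRefl_length (D : List ℤ) {r j : ℕ} :
    (applyRefl D (r, -(j : ℤ))).length = D.length := by
  unfold applyRefl
  split_ifs <;> simp

lemma cycleApply_getD_of_notMem (R : List ℕ) (D : List ℤ) {j s : ℕ}
    (hR : ∀ r ∈ R, 1 ≤ r ∧ r < j) (h1 : ∀ r ∈ R, s ≠ r - 1) (h2 : s ≠ j - 1) :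
    (cycleApply D R j).getD s 0 = D.getD s 0 := by
  induction R generalizing D with
  | nil => rfl
  | cons r rs ih =>
    have h := ih (applyRefl D (r, -(j : ℤ))) (fun x hx => hR x (by simp [hx]))
      (fun x hx => h1 x (by simp [hx]))
    have hr := hR r (by simp)
    rw [applyRefl_getD_of_ne D hr.2 (h1 r (by simp)) h2] at h
    exact h

/-- The smallest of the positions `r_1 < ⋯ < r_p` receives `-D(j)`. -/
lemma cycleApply_getD_head (r : ℕ) (rs : List ℕ) (D : List ℤ) {j : ℕ}
    (hR : sortedR (r :: rs) j D.length) :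
    (cycleApply D (r :: rs) j).getD (r - 1) 0 = -D.getD (j - 1) 0 := by
  obtain ⟨hc, hb, hj, hjd⟩ := hR
  have hp : List.Pairwise (· < ·) (r :: rs) := List.isChain_iff_pairwise.mp hc
  have hr := hb r (by simp)
  rw [← applyRefl_getD_left D hr.1 hr.2 hjd]
  refine cycleApply_getD_of_notMem rs _ (fun x hx => hb x (by simp [hx])) ?_ (by omega)
  intro x hx
  have := List.rel_of_pairwise_cons hp hx
  omega

/-- Position `j` receives the negative of one of the entries `D(r_t)`. -/
lemma cycleApply_getD_self (R : List ℕ) (D : List ℤ) {j : ℕ} (hne : R ≠ [])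
    (hR : sortedR R j D.length) :
    ∃ r ∈ R, (cycleApply D R j).getD (j - 1) 0 = -D.getD (r - 1) 0 := by
  induction R generalizing D with
  | nil => exact absurd rfl hne
  | cons r rs ih =>
    obtain ⟨hc, hb, hj, hjd⟩ := hR
    have hp : List.Pairwise (· < ·) (r :: rs) := List.isChain_iff_pairwise.mp hc
    have hr := hb r (by simp)
    by_cases hrs : rs = []
    · subst hrs
      exact ⟨r, by simp, applyRefl_getD_right D hr.1 hr.2 hjd⟩
    · obtain ⟨x, hx, hxe⟩ := ih (applyRefl D (r, -(j : ℤ))) hrs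
        ⟨List.isChain_iff_pairwise.mpr (List.Pairwise.of_cons hp),
          fun x hx => hb x (by simp [hx]), hj, by rw [applyRefl_length]; exact hjd⟩
      have hxb := hb x (by simp [hx])
      have := List.rel_of_pairwise_cons hp hx
      rw [applyRefl_getD_of_ne D hr.2 (by omega) (by omega)] at hxe
      exact ⟨x, by simp [hx], hxe⟩

lemma colDistinct.ne {c : List ℤ} (h : colDistinct c) {p q : ℕ} (hp : p < c.length)
    (hq : q < c.length) (hpq : p ≠ q) :
    c.getD p 0 ≠ c.getD q 0 ∧ c.getD p 0 ≠ -(c.getD q 0) := by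
  rcases lt_or_gt_of_ne hpq with h1 | h1
  · exact h p q h1 hq
  · have := h q p h1 hp
    exact ⟨this.1.symm, fun e => this.2 (by rw [e]; ring)⟩

lemma slt_irrefl (a : ℤ) : ¬ slt a a := by unfold slt; omega

lemma take_getD (C : List ℤ) {d r : ℕ} (h : r < d) : (C.take d).getD r 0 = C.getD r 0 := by
  simp [List.getD_eq_getElem?_getD, h]

lemma word_to_end (D : List ℤ) (j : ℕ) : word D (j + 1 + 1) D.length = D.drop (j + 1) := by
  unfold word
  apply List.take_of_length_le
  simp

/-! ### The statistics of a single transition -/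

/-- If `C` and `D` differ exactly in the (0-based) position `j`, where `C` is smaller, the
case-by-case definition of `(N, des)` has exactly one applicable case, namely `p = 0`: every
nonempty product of reflections `(r,-j')` would change both positions `r_1` and `j'`. -/
lemma NdesCand_single (n : ℕ) (D C : List ℤ) (j : ℕ) (hj : j < D.length)
    (hle : D.length ≤ C.length) (hD : colDistinct D) (hC : colDistinct C)
    (hagree : ∀ r, r < D.length → r ≠ j → C.getD r 0 = D.getD r 0)
    (hlt : slt (C.getD j 0) (D.getD j 0)) :
    NdesCand n D C = {(Nab (C.getD j 0) (D.getD j 0) (D.drop (j + 1)), 1)} := by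
  have hdiff : ∀ r, r < D.length → C.getD r 0 ≠ D.getD r 0 → r = j := by
    intro r hr h
    by_contra hne
    exact h (hagree r hr hne)
  have hjne : C.getD j 0 ≠ D.getD j 0 := fun h => slt_irrefl _ (h ▸ hlt)
  ext x
  simp only [NdesCand, Set.mem_ofPred_eq, Set.mem_singleton_iff]
  constructor
  · rintro (⟨h, -⟩ | ⟨j', R, hR, hne, h, -⟩ | ⟨j', R, hR, h1, h2, h3, h4⟩)
    · exact absurd (by rw [← take_getD C hj, h]) hjne
    · exfalso
      obtain ⟨r', hr', he⟩ := cycleApply_getD_self R D hne hR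
      cases R with
      | nil => exact hne rfl
      | cons r rs =>
        have hh := cycleApply_getD_head r rs D hR
        obtain ⟨-, hb, hj1, hjd⟩ := hR
        have hr := hb r (by simp)
        have hrr := hb r' hr'
        rw [← h, take_getD C (by omega)] at hh he
        have e1 := hdiff (r - 1) (by omega) (by
          rw [hh]
          exact (hD.ne (p := r - 1) (q := j' - 1) (by omega) (by omega) (by omega)).2.symm)
        have e2 := hdiff (j' - 1) (by omega) (by
          rw [he]
          exact (hD.ne (p := j' - 1) (q := r' - 1) (by omega) (by omega) (by omega)).2.symm)
        omega
    · cases R with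
      | nil =>
        obtain ⟨-, -, hj1, hjd⟩ := hR
        simp only [cycleApply, List.foldl_nil, cycleN, List.length_nil, zero_add] at h3 h4
        rw [take_getD C (by omega)] at h3 h4
        have e := hdiff (j' - 1) (by omega) (fun e => slt_irrefl _ (e ▸ h3))
        obtain rfl : j' = j + 1 := by omega
        rw [h4, word_to_end]
        simp
      | cons r rs =>
        exfalso
        have hh := cycleApply_getD_head r rs D hR
        obtain ⟨-, hb, hj1, hjd⟩ := hR
        have hr := hb r (by simp)
        have h1r := h1 r hr.1 (by omega) (by omega)
        have h2r := (h2 r hr.1 (by omega) (by omega)).2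
        rw [hh, take_getD C (by omega)] at h1r h2r
        have e1 := hdiff (r - 1) (by omega) (by
          rw [h1r]
          exact (hD.ne (p := r - 1) (q := j' - 1) (by omega) (by omega) (by omega)).2.symm)
        have e2 := hdiff (j' - 1) (by omega) (by simpa using h2r)
        omega
  · rintro rfl
    refine Or.inr (Or.inr ⟨j + 1, [], ⟨List.isChain_nil, by simp, by omega, by omega⟩, ?_⟩)
    simp only [cycleApply, List.foldl_nil, cycleN, List.length_nil, zero_add]
    rw [word_to_end, Nat.add_sub_cancel, take_getD C hj]
    refine ⟨?_, ?_, hlt, rfl⟩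
    · intro r h1 h2 h3
      rw [take_getD C (by omega)]
      exact hagree _ (by omega) (by omega)
    · intro r h1 h2 h3
      rw [← hagree (r - 1) (by omega) (by omega)]
      exact hC.ne (by omega) (by omega) (by omega)

lemma Nstat_of_take_eq (n : ℕ) (D C : List ℤ) (h : C.take D.length = D) : Nstat n D C = 0 := by
  unfold Nstat
  exact Nat.sInf_eq_zero.mpr (Or.inl ⟨0, Or.inl ⟨h, rfl⟩⟩)

lemma desStat_of_take_eq (n : ℕ) (D C : List ℤ) (h : C.take D.length = D) : desStat n D C = 0 := by
  unfold desStat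
  exact Nat.sInf_eq_zero.mpr (Or.inl ⟨0, Or.inl ⟨h, rfl⟩⟩)

lemma slt_trans {a b c : ℤ} (h : slt a b) (h' : slt b c) : slt a c := by
  unfold slt at *; omega

lemma Nab_self (a : ℤ) (u : List ℤ) : Nab a a u = 0 := by
  unfold Nab
  rw [List.length_eq_zero_iff, List.filter_eq_nil_iff]
  intro c _
  simpa using fun h k => slt_irrefl a (slt_trans h k)

/-- `N(D,C)` and `des(D,C)` for columns differing at most in the (0-based) position `j`. -/
lemma stat_step (n : ℕ) (D C : List ℤ) (j : ℕ) (hj : j < D.length)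
    (hle : D.length ≤ C.length) (hD : colDistinct D) (hC : colDistinct C)
    (hagree : ∀ r, r < D.length → r ≠ j → C.getD r 0 = D.getD r 0)
    (hsle : sle (C.getD j 0) (D.getD j 0)) :
    Nstat n D C = Nab (C.getD j 0) (D.getD j 0) (D.drop (j + 1)) ∧
    desStat n D C = if slt (C.getD j 0) (D.getD j 0) then 1 else 0 := by
  rcases hsle with hlt | heq
  · have h := NdesCand_single n D C j hj hle hD hC hagree hlt
    unfold Nstat desStat
    rw [h, if_pos hlt]
    simp
  · have h : C.take D.length = D := by
      apply List.ext_getElem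
      · simpa using hle
      · intro r h1 h2
        have : C.getD r 0 = D.getD r 0 := by
          by_cases hr : r = j
          · rw [hr, heq]
          · exact hagree r h2 hr
        rw [List.getD_eq_getElem _ _ (by omega), List.getD_eq_getElem _ _ h2] at this
        simpa using this
    rw [Nstat_of_take_eq n D C h, desStat_of_take_eq n D C h, heq, Nab_self, if_neg (slt_irrefl _)]
    exact ⟨rfl, rfl⟩

/-! ### The statistics of a block of columns -/

lemma filter_drop_length (l : List ℤ) (k : ℕ) (p : ℤ → Prop) [DecidablePred p] :
    ((l.drop k).filter (fun c => decide (p c))).length =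
      ((Finset.range l.length).filter (fun i => k ≤ i ∧ p (l.getD i 0))).card := by
  induction l generalizing k with
  | nil => simp
  | cons a l ih =>
    rw [List.length_cons, Finset.card_filter, Finset.sum_range_succ', ← Finset.card_filter]
    cases k with
    | zero =>
      have := ih 0
      simp only [List.drop_zero, Nat.zero_le, true_and] at this ⊢
      simp only [List.filter_cons, List.getD_cons_succ, List.getD_cons_zero]
      rw [← this]
      by_cases h : p a <;> simp [h]
    | succ k =>
      simp only [List.drop_succ_cons, List.getD_cons_succ]
      rw [ih k]
      simp

/-- `#{j < l : B(j) ≺ A(l) ≺ A(j)}`, the total contribution to `N` of the transitions leading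
from the column `A` to the column `B` by changing the positions `1, 2, …` one after another. -/
def blockN (A B : List ℤ) : ℕ :=
  ((Finset.range A.length ×ˢ Finset.range A.length).filter (fun p => p.1 < p.2 ∧
    slt (B.getD p.1 0) (A.getD p.2 0) ∧ slt (A.getD p.2 0) (A.getD p.1 0))).card

/-- The complementary inversions of a column `B` with left neighbour `A`. -/
def pairCinv (A B : List ℤ) : ℕ :=
  ((Finset.range B.length ×ˢ Finset.range B.length).filter (fun p => p.1 < p.2 ∧
    ((p.2 < A.length ∧ slt (B.getD p.2 0) (B.getD p.1 0) ∧ slt (B.getD p.1 0) (A.getD p.2 0)) ∨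
      (¬ p.2 < A.length ∧ slt (B.getD p.2 0) (B.getD p.1 0))))).card

/-- The number of rows in which the entry strictly drops from `A` to `B`. -/
def pairDes (A B : List ℤ) : ℕ :=
  ((Finset.range A.length).filter (fun r => slt (B.getD r 0) (A.getD r 0))).card

/-- `Y 0, …, Y d` is a sequence of columns in which the step from `Y j` to `Y (j+1)` changes, among
the first `d` positions, at most the (0-based) position `j`, where the entry weakly decreases.
All columns but the last have height `d`, the last has height at least `d`. -/
structure BlockSeq (Y : ℕ → List ℤ) (d : ℕ) : Prop where
  length_eq : ∀ j, j < d → (Y j).length = d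
  length_le : ∀ j, j ≤ d → d ≤ (Y j).length
  distinct : ∀ j, j ≤ d → colDistinct (Y j)
  agree : ∀ j, j < d → ∀ r, r < d → r ≠ j → (Y (j + 1)).getD r 0 = (Y j).getD r 0
  desc : ∀ j, j < d → sle ((Y (j + 1)).getD j 0) ((Y j).getD j 0)

namespace BlockSeq

variable {Y : ℕ → List ℤ} {d : ℕ}

lemma eq_first (h : BlockSeq Y d) {r : ℕ} (hr : r < d) :
    ∀ j, j ≤ r → (Y j).getD r 0 = (Y 0).getD r 0 := by
  intro j
  induction j with
  | zero => intro _; rfl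
  | succ j ih =>
    intro hj
    rw [h.agree j (by omega) r hr (by omega), ih (by omega)]

lemma eq_last (h : BlockSeq Y d) {r : ℕ} (hr : r < d) :
    ∀ k, r < k → k ≤ d → (Y d).getD r 0 = (Y k).getD r 0 := by
  intro k hk hkd
  induction hkd using Nat.decreasingInduction with
  | self => rfl
  | of_succ k hkd ih =>
    rw [ih (by omega), h.agree k (by omega) r hr (by omega)]

lemma sum_stat (h : BlockSeq Y d) (hd : 0 < d) (n : ℕ) :
    ∑ j ∈ Finset.range d, Nstat n (Y j) (Y (j + 1)) = blockN (Y 0) (Y d) ∧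
    ∑ j ∈ Finset.range d, desStat n (Y j) (Y (j + 1)) = pairDes (Y 0) (Y d) := by
  have hstep : ∀ j, j < d →
      Nstat n (Y j) (Y (j + 1)) = ((Finset.range d).filter (fun l => j < l ∧
        slt ((Y d).getD j 0) ((Y 0).getD l 0) ∧
        slt ((Y 0).getD l 0) ((Y 0).getD j 0))).card ∧
      desStat n (Y j) (Y (j + 1)) =
        if slt ((Y d).getD j 0) ((Y 0).getD j 0) then 1 else 0 := by
    intro j hj
    have hl := h.length_eq j hj
    obtain ⟨h1, h2⟩ := stat_step n (Y j) (Y (j + 1)) j (by omega)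
      (by rw [hl]; exact h.length_le (j + 1) (by omega)) (h.distinct j (by omega))
      (h.distinct (j + 1) (by omega)) (fun r hr hne => h.agree j hj r (by omega) hne)
      (h.desc j hj)
    rw [h1, h2, ← h.eq_last hj (j + 1) (by omega) (by omega), h.eq_first hj j le_rfl]
    refine ⟨?_, rfl⟩
    unfold Nab
    rw [filter_drop_length (Y j) (j + 1) (fun c => slt ((Y d).getD j 0) c ∧
      slt c ((Y 0).getD j 0)), hl]
    congr 1
    apply Finset.filter_congr
    intro l hl
    rw [Finset.mem_range] at hl
    constructor
    · rintro ⟨ha, hb⟩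
      rw [h.eq_first hl j (by omega)] at hb
      exact ⟨ha, hb⟩
    · rintro ⟨ha, hb⟩
      rw [h.eq_first hl j (by omega)]
      exact ⟨ha, hb⟩
  have h0 := h.length_eq 0 hd
  constructor
  · rw [Finset.sum_congr rfl (fun j hj => (hstep j (Finset.mem_range.mp hj)).1)]
    unfold blockN
    rw [h0, Finset.card_filter, Finset.sum_product]
    simp only [Finset.card_filter]
  · rw [Finset.sum_congr rfl (fun j hj => (hstep j (Finset.mem_range.mp hj)).2)]
    unfold pairDes
    rw [h0, Finset.card_filter]

lemma row_desc (h : BlockSeq Y d) {r : ℕ} (hr : r < d) :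
    sle ((Y d).getD r 0) ((Y 0).getD r 0) := by
  rw [h.eq_last hr (r + 1) (by omega) (by omega), ← h.eq_first hr r le_rfl]
  exact h.desc r hr

/-- Both entries occur in the intermediate column `Y (j+1)`. -/
lemma mixed_ne (h : BlockSeq Y d) {j l : ℕ} (hjl : j < l) (hl : l < d) :
    (Y d).getD j 0 ≠ (Y 0).getD l 0 := by
  rw [h.eq_last (by omega) (j + 1) (by omega) (by omega), ← h.eq_first hl (j + 1) (by omega)]
  have := h.length_le (j + 1) (by omega)
  exact ((h.distinct (j + 1) (by omega)).ne (by omega) (by omega) (by omega)).1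

end BlockSeq

lemma slt_or {a b : ℤ} (ha : a ≠ 0) (hb : b ≠ 0) (h : a ≠ b) : slt a b ∨ slt b a := by
  unfold slt; omega

lemma slt_asymm {a b : ℤ} (h : slt a b) : ¬ slt b a := by unfold slt at *; omega

/-- The pairwise identity behind the comparison of `N` with `cinv`; here `a, b` are the entries of
two rows in a column and `a', b'` their right neighbours. -/
lemma pair_identity {a b a' b' : ℤ} (h0 : a' ≠ 0) (h1 : b ≠ 0) (ha : sle a' a) (hb : sle b' b)
    (hne : a' ≠ b) :
    (if slt b' a' then 1 else 0) + (if slt a' b ∧ slt b a then 1 else 0) =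
      (if slt b a then 1 else 0) + (if slt b' a' ∧ slt a' b then 1 else 0) := by
  rcases slt_or h0 h1 hne with h | h
  · by_cases h2 : slt b' a' <;> by_cases h3 : slt b a <;> simp [h, h2, h3]
  · have h2 : slt b' a' := by
      rcases hb with hb | hb
      · exact slt_trans hb h
      · rw [hb]; exact h
    have h3 : slt b a := by
      rcases ha with ha | ha
      · exact slt_trans h ha
      · rw [← ha]; exact h
    simp [slt_asymm h, h2, h3]

/-- Replacing the column `A` by its right neighbour `B` changes `ℓ₊` by the difference of the
complementary inversions and the contribution of the transitions to `N`. -/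
lemma lplus_add_blockN (A B : List ℤ) (hle : A.length ≤ B.length)
    (hA0 : ∀ r, r < A.length → A.getD r 0 ≠ 0) (hB0 : ∀ r, r < B.length → B.getD r 0 ≠ 0)
    (hdesc : ∀ r, r < A.length → sle (B.getD r 0) (A.getD r 0))
    (hmix : ∀ j l, j < l → l < A.length → B.getD j 0 ≠ A.getD l 0) :
    lplus B + blockN A B = lplus A + pairCinv A B := by
  have e1 : blockN A B = ((Finset.range B.length ×ˢ Finset.range B.length).filter (fun p =>
      p.2 < A.length ∧ p.1 < p.2 ∧
      slt (B.getD p.1 0) (A.getD p.2 0) ∧ slt (A.getD p.2 0) (A.getD p.1 0))).card := by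
    unfold blockN
    congr 1
    ext p
    simp only [Finset.mem_filter, Finset.mem_product, Finset.mem_range]
    constructor
    · rintro ⟨h1, h2, h3⟩
      exact ⟨by omega, h1.2, h2, h3⟩
    · rintro ⟨h1, h2, h3, h4⟩
      exact ⟨by omega, h3, h4⟩
  have e2 : lplus A = ((Finset.range B.length ×ˢ Finset.range B.length).filter (fun p =>
      p.2 < A.length ∧ p.1 < p.2 ∧ slt (A.getD p.2 0) (A.getD p.1 0))).card := by
    unfold lplus
    congr 1
    ext p
    simp only [Finset.mem_filter, Finset.mem_product, Finset.mem_range]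
    constructor
    · rintro ⟨h1, h2, h3⟩
      exact ⟨by omega, h1.2, h2, h3⟩
    · rintro ⟨h1, h2, h3, h4⟩
      exact ⟨by omega, h3, h4⟩
  rw [e1, e2]
  unfold lplus pairCinv
  simp only [Finset.card_filter]
  rw [← Finset.sum_add_distrib, ← Finset.sum_add_distrib]
  apply Finset.sum_congr rfl
  rintro ⟨j, l⟩ hp
  simp only [Finset.mem_product, Finset.mem_range] at hp
  simp only
  by_cases hjl : j < l
  · by_cases hl : l < A.length
    · have := pair_identity (hB0 j hp.1) (hA0 l hl) (hdesc j (by omega)) (hdesc l hl)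
        (hmix j l hjl hl)
      simpa [hjl, hl] using this
    · simp [hl]
  · simp [hjl]

/-! ### Sums over adjacent columns -/

lemma adjSumN_replicate (f : List ℤ → List ℤ → ℕ) (A : List ℤ) (hf : f A A = 0) (p : ℕ)
    (rest : List (List ℤ)) :
    adjSumN f (List.replicate p A ++ A :: rest) = adjSumN f (A :: rest) := by
  induction p with
  | zero => rfl
  | succ p ih =>
    cases p with
    | zero => simp [adjSumN, hf]
    | succ p =>
      simp only [List.replicate_succ, List.cons_append, adjSumN, hf, zero_add] at ih ⊢
      exact ih

lemma adjSumN_range (f : List ℤ → List ℤ → ℕ) (Y : ℕ → List ℤ) (d : ℕ)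
    (rest : List (List ℤ)) :
    adjSumN f ((List.range d).map Y ++ Y d :: rest) =
      ∑ j ∈ Finset.range d, f (Y j) (Y (j + 1)) + adjSumN f (Y d :: rest) := by
  induction d generalizing rest with
  | zero => simp
  | succ d ih =>
    rw [List.range_succ, List.map_append, List.map_singleton, List.append_assoc,
      List.singleton_append, ih, Finset.sum_range_succ, adjSumN, add_assoc]

lemma cinvTau_singleton (A : List ℤ) : cinvTau [A] = lplus A := by
  simp [cinvTau, lplus]

/-- Prepending a column `A` to the columns `B, …` only changes the complementary inversions of
`B`, which was the leftmost column, and adds those of `A`. -/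
lemma cinvTau_cons_cons (A B : List ℤ) (rest : List (List ℤ)) :
    cinvTau (A :: B :: rest) + lplus B = lplus A + pairCinv A B + cinvTau (B :: rest) := by
  unfold cinvTau
  rw [List.length_cons, List.length_cons, Finset.sum_range_succ', Finset.sum_range_succ',
    Finset.sum_range_succ']
  simp [lplus, pairCinv]
  ring

/-! ### Block structure of the filling -/

lemma conj_anti (n : ℕ) (lam : Fin n → ℕ) {i k : ℕ} (h : i ≤ k) :
    conj n lam k ≤ conj n lam i := by
  unfold conj
  apply Finset.card_le_card
  intro j hj
  simp only [Finset.mem_filter, Finset.mem_univ, true_and] at hj ⊢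
  omega

lemma conj_pos (n : ℕ) (lam : Fin n → ℕ) {i : ℕ} (h1 : 1 ≤ i) (h : i ≤ lamOne n lam) :
    0 < conj n lam i := by
  unfold lamOne at h
  obtain ⟨j, -, hj⟩ := (Finset.le_sup_iff (by simpa using Nat.pos_of_ne_zero (by omega))).mp h
  exact Finset.card_pos.mpr ⟨j, by simpa using hj⟩

/-- The columns `C_{i,1}, …, C_{i,λ'_i}` followed by `C_{i-1,1}`, with 0-based indices. -/
def blockCol (n : ℕ) (lam : Fin n → ℕ) (F : Filling) (i j : ℕ) : List ℤ :=
  if j < conj n lam i then F.Cu i (j + 1) else F.Cu (i - 1) 1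

/-- The columns of the block `C^i`, listed from left to right. -/
def blockList (n : ℕ) (lam : Fin n → ℕ) (F : Filling) (i : ℕ) : List (List ℤ) :=
  ((List.range (conj n lam i - 1)).map (fun s => F.Cp i (s + 2))) ++
    (if i = 1 then [F.Cu 1 1] else (List.range (conj n lam i)).map (fun s => F.Cu i (s + 1)))

/-- The columns of the blocks `C^m, …, C^1`, listed from left to right. -/
def colsUpTo (n : ℕ) (lam : Fin n → ℕ) (F : Filling) (m : ℕ) : List (List ℤ) :=
  ((List.range m).map (fun t => blockList n lam F (m - t))).flatten

/-- The columns `C_{m,1}, …, C_{1,1}` of the filling of the plain shape. -/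
def firstCols (F : Filling) (m : ℕ) : List (List ℤ) :=
  (List.range m).map (fun t => F.Cu (m - t) 1)

lemma colsUpTo_succ (n : ℕ) (lam : Fin n → ℕ) (F : Filling) (m : ℕ) :
    colsUpTo n lam F (m + 1) = blockList n lam F (m + 1) ++ colsUpTo n lam F m := by
  unfold colsUpTo
  rw [List.range_succ_eq_map]
  simp [Function.comp_def]

lemma firstCols_succ (F : Filling) (m : ℕ) :
    firstCols F (m + 1) = F.Cu (m + 1) 1 :: firstCols F m := by
  unfold firstCols
  rw [List.range_succ_eq_map]
  simp [Function.comp_def]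

lemma CuNxt_eq {n : ℕ} {lam : Fin n → ℕ} {F : Filling}
    (hprimed : ∀ i k, validP n lam i k → F.Cp i k = F.Cu i 1)
    {i j : ℕ} (h2 : 2 ≤ i) (hi : i ≤ lamOne n lam) :
    CuNxt n lam F i (j + 1) = blockCol n lam F i (j + 1) := by
  unfold CuNxt blockCol
  split_ifs with h3 h4
  · rfl
  · exact hprimed _ _ ⟨by omega, by omega, le_rfl, h4⟩
  · rfl

lemma blockSeq {n : ℕ} {lam : Fin n → ℕ} {F : Filling}
    (hF : F ∈ FSet n lam)
    (hprimed : ∀ i k, validP n lam i k → F.Cp i k = F.Cu i 1)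
    (hp0 : ∀ i j, 2 ≤ i → validU n lam i j → ∀ r, 1 ≤ r → r ≤ conj n lam i → r ≠ j →
      ((CuNxt n lam F i j).take (conj n lam i)).getD (r - 1) 0 = (F.Cu i j).getD (r - 1) 0)
    {i : ℕ} (h2 : 2 ≤ i) (hi : i ≤ lamOne n lam) :
    BlockSeq (blockCol n lam F i) (conj n lam i) := by
  obtain ⟨-, hlen, -, -, -, hrow, -, hdist, -, -⟩ := hF
  have hv : ∀ j, j < conj n lam i → validU n lam i (j + 1) :=
    fun j hj => ⟨by omega, hi, by omega, by omega, by omega⟩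
  have hanti : conj n lam i ≤ conj n lam (i - 1) := conj_anti n lam (by omega)
  have hpos := conj_pos n lam (by omega) hi
  have hv' : validU n lam (i - 1) 1 := ⟨by omega, by omega, le_rfl, by omega, by simp⟩
  have hcur : ∀ j, j < conj n lam i → blockCol n lam F i j = F.Cu i (j + 1) :=
    fun j hj => if_pos hj
  refine ⟨?_, ?_, ?_, ?_, ?_⟩
  · intro j hj
    rw [hcur j hj]
    exact (hlen _ _).1 (hv j hj)
  · intro j _
    unfold blockCol
    split_ifs with h
    · exact ((hlen _ _).1 (hv j h)).ge
    · rw [(hlen _ _).1 hv']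
      exact hanti
  · intro j _
    unfold blockCol
    split_ifs with h
    · exact hdist _ _ (hv j h)
    · exact hdist _ _ hv'
  · intro j hj r hr hne
    have := hp0 i (j + 1) h2 (hv j hj) (r + 1) (by omega) (by omega) (by omega)
    rw [Nat.add_sub_cancel, take_getD _ hr, CuNxt_eq hprimed h2 hi] at this
    rw [this, hcur j hj]
  · intro j hj
    have := hrow i (j + 1) h2 (hv j hj) (j + 1) (by omega) (by omega)
    rw [Nat.add_sub_cancel, CuNxt_eq hprimed h2 hi] at this
    rw [hcur j hj]
    exact this

lemma firstCol_ne_zero {n : ℕ} {lam : Fin n → ℕ} {F : Filling}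
    (hF : F ∈ FSet n lam)
    {i : ℕ} (h1 : 1 ≤ i) (hi : i ≤ lamOne n lam) (r : ℕ)
    (hr : r < (F.Cu i 1).length) : (F.Cu i 1).getD r 0 ≠ 0 := by
  obtain ⟨-, -, -, hent, -⟩ := hF
  have hv : validU n lam i 1 := ⟨h1, hi, le_rfl, conj_pos n lam h1 hi, by simp⟩
  have := hent i 1 hv _ (List.getElem_mem hr)
  rw [List.getD_eq_getElem _ _ hr]
  intro h
  rw [h] at this
  simp at this

/-- The primed columns of a block are copies of its first unprimed column. -/
lemma blockList_eq {n : ℕ} {lam : Fin n → ℕ} {F : Filling}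
    (hprimed : ∀ i k, validP n lam i k → F.Cp i k = F.Cu i 1)
    {i : ℕ} (h1 : 1 ≤ i) (hi : i ≤ lamOne n lam) :
    blockList n lam F i = List.replicate (conj n lam i - 1) (F.Cu i 1) ++
      (if i = 1 then [F.Cu 1 1]
        else (List.range (conj n lam i)).map (blockCol n lam F i)) := by
  unfold blockList
  congr 1
  · rw [List.eq_replicate_iff]
    refine ⟨by simp, ?_⟩
    intro b hb
    simp only [List.mem_map, List.mem_range] at hb
    obtain ⟨s, hs, rfl⟩ := hb
    exact hprimed _ _ ⟨h1, hi, by omega, by omega⟩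
  · split_ifs with h
    · rfl
    · apply List.map_congr_left
      intro j hj
      exact (if_pos (List.mem_range.mp hj)).symm

lemma adjSumN_block (f : List ℤ → List ℤ → ℕ) (hf : ∀ A, f A A = 0) (Y : ℕ → List ℤ) (p d : ℕ)
    (hd : 0 < d) (rest : List (List ℤ)) :
    adjSumN f (List.replicate p (Y 0) ++ ((List.range d).map Y ++ Y d :: rest)) =
      ∑ j ∈ Finset.range d, f (Y j) (Y (j + 1)) + adjSumN f (Y d :: rest) := by
  rw [← adjSumN_range]
  obtain ⟨e, rfl⟩ : ∃ e, d = e + 1 := ⟨d - 1, by omega⟩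
  rw [List.range_succ_eq_map]
  exact adjSumN_replicate f (Y 0) (hf _) p _

lemma replicate_append_head (A : List ℤ) (p : ℕ) (rest : List (List ℤ)) :
    ∃ rest', List.replicate p A ++ A :: rest = A :: rest' := by
  cases p with
  | zero => exact ⟨_, rfl⟩
  | succ p => exact ⟨_, rfl⟩

/-- The theorem for the part of the filling consisting of the blocks `C^{m+1}, …, C^1`, by
induction on the number of blocks; the first two clauses identify the column at which the next
block is attached. -/
lemma main_induction (n : ℕ) (lam : Fin n → ℕ) (F : Filling) (hF : F ∈ FSet n lam)
    (hprimed : ∀ i k, validP n lam i k → F.Cp i k = F.Cu i 1)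
    (hp0 : ∀ i j, 2 ≤ i → validU n lam i j → ∀ r, 1 ≤ r → r ≤ conj n lam i → r ≠ j →
      ((CuNxt n lam F i j).take (conj n lam i)).getD (r - 1) 0 = (F.Cu i j).getD (r - 1) 0)
    (m : ℕ) (hm : m + 1 ≤ lamOne n lam) :
    (∃ rest, colsUpTo n lam F (m + 1) = F.Cu (m + 1) 1 :: rest) ∧
    (∃ rest, firstCols F (m + 1) = F.Cu (m + 1) 1 :: rest) ∧
    adjSumN (Nstat n) (colsUpTo n lam F (m + 1)) + lplus (F.Cu 1 1) =
      cinvTau (firstCols F (m + 1)) ∧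
    (colsUpTo n lam F (m + 1)).getLastD [] = F.Cu 1 1 ∧
    adjSumN (desStat n) (colsUpTo n lam F (m + 1)) = adjSumN pairDes (firstCols F (m + 1)) := by
  have hN : ∀ A, Nstat n A A = 0 := fun A => Nstat_of_take_eq n A A (by simp)
  have hDes : ∀ A, desStat n A A = 0 := fun A => desStat_of_take_eq n A A (by simp)
  induction m with
  | zero =>
    have hl : colsUpTo n lam F (0 + 1) =
        List.replicate (conj n lam 1 - 1) (F.Cu 1 1) ++ [F.Cu 1 1] := by
      rw [colsUpTo_succ, blockList_eq hprimed le_rfl hm]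
      simp [colsUpTo]
    have hl' : firstCols F (0 + 1) = [F.Cu 1 1] := by simp [firstCols]
    rw [hl, hl', adjSumN_replicate _ _ (hN _), adjSumN_replicate _ _ (hDes _), cinvTau_singleton]
    exact ⟨replicate_append_head _ _ _, ⟨[], rfl⟩, by simp [adjSumN], by simp,
      by simp [adjSumN]⟩
  | succ m ih =>
    obtain ⟨⟨rest, hr⟩, ⟨rest', hfirst⟩, ihN, ihL, ihD⟩ := ih (by omega)
    have hd := conj_pos n lam (by omega) hm
    have hY := blockSeq hF hprimed hp0 (i := m + 1 + 1) (by omega) hm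
    obtain ⟨hs1, hs2⟩ := hY.sum_stat hd n
    have hY0 : blockCol n lam F (m + 1 + 1) 0 = F.Cu (m + 1 + 1) 1 := if_pos hd
    have hYd : blockCol n lam F (m + 1 + 1) (conj n lam (m + 1 + 1)) = F.Cu (m + 1) 1 :=
      if_neg (lt_irrefl _)
    have hl : colsUpTo n lam F (m + 1 + 1) =
        List.replicate (conj n lam (m + 1 + 1) - 1) (blockCol n lam F (m + 1 + 1) 0) ++
          ((List.range (conj n lam (m + 1 + 1))).map (blockCol n lam F (m + 1 + 1)) ++
            blockCol n lam F (m + 1 + 1) (conj n lam (m + 1 + 1)) :: rest) := by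
      rw [colsUpTo_succ, blockList_eq hprimed (by omega) hm, if_neg (by omega), hr, hY0, hYd,
        List.append_assoc]
    refine ⟨?_, ⟨_, firstCols_succ F (m + 1)⟩, ?_, ?_, ?_⟩
    · rw [hl]
      obtain ⟨e, he⟩ : ∃ e, conj n lam (m + 1 + 1) = e + 1 := ⟨_, (Nat.succ_pred_eq_of_pos hd).symm⟩
      rw [← hY0, he, List.range_succ_eq_map]
      exact replicate_append_head _ _ _
    · have hc := cinvTau_cons_cons (F.Cu (m + 1 + 1) 1) (F.Cu (m + 1) 1) rest'
      have hlen := hY.length_eq 0 hd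
      have hb := lplus_add_blockN (F.Cu (m + 1 + 1) 1) (F.Cu (m + 1) 1)
        (by rw [← hY0, ← hYd, hlen]; exact hY.length_le _ le_rfl)
        (firstCol_ne_zero hF (by omega) hm) (firstCol_ne_zero hF (by omega) (by omega))
        (by rw [← hY0, ← hYd, hlen]; exact fun r hr => hY.row_desc hr)
        (by rw [← hY0, ← hYd, hlen]; exact fun j l hjl hl => hY.mixed_ne hjl hl)
      rw [hl, adjSumN_block _ hN _ _ _ hd, hs1, hYd, ← hr, hY0, firstCols_succ, hfirst]
      rw [hfirst] at ihN
      omega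
    · rw [colsUpTo_succ, hr]
      rw [hr] at ihL
      rw [← ihL]
      simp [List.getLastD_eq_getLast?, List.getLast?_cons]
    · rw [hl, adjSumN_block _ hDes _ _ _ hd, hs2, hYd, ← hr, hY0, firstCols_succ, hfirst, adjSumN,
        ihD, hfirst]

/-- Proposition 2.2: for a filling `σ ∈ F(λ)` whose primed
columns all coincide with the first unprimed column of their block, and whose
unprimed transitions all have `p = 0` (i.e. `C_{i,j+1}` differs from `C_{i,j}`
only in position `j`), the statistics `N(σ)` and `des(σ)` agree with the
complementary inversion statistic and the descent statistic of the associated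
filling `\tildeσ = C_{λ_1,1} C_{λ_1-1,1} ⋯ C_{1,1}` of the shape `λ`. -/
theorem Nstat_eq_cinv_special (n : ℕ) (hn : 2 ≤ n) (lam : Fin n → ℕ)
    (hstrict : ∀ i j : Fin n, i < j → lam j < lam i) (hpos : ∀ i, 0 < lam i)
    (F : Filling) (hF : F ∈ FSet n lam)
    (hprimed : ∀ i k, validP n lam i k → F.Cp i k = F.Cu i 1)
    (hp0 : ∀ i j, 2 ≤ i → validU n lam i j → ∀ r, 1 ≤ r → r ≤ conj n lam i → r ≠ j →
      ((CuNxt n lam F i j).take (conj n lam i)).getD (r - 1) 0 =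
        (F.Cu i j).getD (r - 1) 0) :
    Nsigma n lam F =
      cinvTau ((List.range (lamOne n lam)).map (fun t => F.Cu (lamOne n lam - t) 1)) ∧
    desSigma n lam F =
      desTau ((List.range (lamOne n lam)).map (fun t => F.Cu (lamOne n lam - t) 1)) := by
  obtain ⟨m, hm⟩ : ∃ m, lamOne n lam = m + 1 := by
    have h0 : 0 < lam ⟨0, by omega⟩ := hpos _
    have h1 : lam ⟨0, by omega⟩ ≤ lamOne n lam := Finset.le_sup (f := lam) (Finset.mem_univ _)
    exact ⟨lamOne n lam - 1, by omega⟩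
  obtain ⟨-, -, h1, h2, h3⟩ := main_induction n lam F hF hprimed hp0 m (by omega)
  unfold Nsigma desSigma desTau
  rw [hm]
  have hc : colList n lam F = colsUpTo n lam F (m + 1) := by
    rw [colsUpTo, ← hm]
    rfl
  rw [hc, h2]
  exact ⟨h1, h3⟩
end HL
end

section
/- For each 1 ≤ k ≤ n, the sequence Gamma(k) is an omega_k-chain for the fundamental weight omega_k = epsilon_1 + ... + epsilon_k of type C_n; equivalently, it satisfies: (R1) every positive root alpha of C_n occurs in Gamma(k) exactly <omega_k, alpha^v> times (explicitly: epsilon_a + epsilon_b with a < b occurs twice if b ≤ k, once if a ≤ k < b, and not at all otherwise; epsilon_a - epsilon_b with a < b occurs once if a ≤ k < b and not at all otherwise; 2 epsilon_a occurs once if a ≤ k and not at all otherwise); and (R2) for every triple (alpha, beta, gamma) of positive roots of C_n with gamma^v = alpha^v + beta^v, the subsequence of Gamma(k) consisting of all occurrences of alpha, beta, and gamma is a concatenation of consecutive pairs, each pair being (gamma, alpha) or (gamma, beta), in some order. -/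
/-!
Each entry of the chain `Γ(k)` is labelled by its position (`Pos`), so that distinct entries get
distinct labels even when the root is repeated. The labels carry an explicit strict order
`Before`, the list of labels is sorted for it (`Pos.pairwise_chain`), and its members are described
by linear inequalities (`Pos.mem_chain`). Two sorted lists with the same members are equal, so any
subsequence of `Γ(k)` given by a predicate on roots is determined by listing the positions of the
roots satisfying it in increasing order (`filter_gammaChain`).

(R1) follows by listing the positions of a single root, and by comparing with
`⟨ω_k, α^∨⟩`, computed from the coordinates of `α^∨`.

For (R2), the relations `γ^∨ = α^∨ + β^∨` between positive coroots are, up to exchanging `α` and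
`β` and with `a < b < c`:
`ε_a - ε_c = (ε_a - ε_b) + (ε_b - ε_c)`, `ε_a + ε_c = (ε_a - ε_b) + (ε_b + ε_c)`,
`ε_a + ε_b = (ε_a - ε_c) + (ε_b + ε_c)`, `ε_a + ε_b = (ε_b - ε_c) + (ε_a + ε_c)`,
the sum of the coroots `ε_a` and `ε_b` of `2ε_a` and `2ε_b`, and `ε_a = (ε_a - ε_b) + ε_b`
(`R2_of_coroot`). For each of them, and each location of `k` among the indices, the subsequence is
an explicit list of length 0, 2 or 4 of the required shape.
-/

open scoped BigOperators

namespace HL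

/-! ### Positions of the chain -/

/-- A position in the chain `Γ(k)`: `pre i j` is the entry `(i,-j)` of `Γ'_j` in the first part of
the chain; `mid i j`, `neg j m`, `dbl j` and `pos j m` are the entries `(i,-j)`, `(j,-m)`,
`(j,-j)` and `(j,m)` of `Γ_j(k)`. -/
inductive Pos where
  | pre (i j : ℕ)
  | mid (i j : ℕ)
  | neg (j m : ℕ)
  | dbl (j : ℕ)
  | pos (j m : ℕ)

namespace Pos

/-- The symbol found at a position. Among the positions of `Γ(k)`, only `pre i j` and `mid i j`
share a symbol. -/
def root : Pos → ℕ × ℤ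
  | pre i j => (i, -(j : ℤ))
  | mid i j => (i, -(j : ℤ))
  | neg j m => (j, -(m : ℤ))
  | dbl j => (j, -(j : ℤ))
  | pos j m => (j, (m : ℤ))

/-- The index ranges for which a position actually occurs in `Γ(k)`. -/
def Valid (n k : ℕ) : Pos → Prop
  | pre i j => 1 ≤ i ∧ i < j ∧ j ≤ k
  | mid i j => 1 ≤ i ∧ i < j ∧ j ≤ k
  | neg j m => 1 ≤ j ∧ j ≤ k ∧ k < m ∧ m ≤ n
  | dbl j => 1 ≤ j ∧ j ≤ k
  | pos j m => 1 ≤ j ∧ j ≤ k ∧ k < m ∧ m ≤ n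

/-- The strict order in which positions occur in `Γ(k)`: the first part precedes the blocks
`Γ_j(k)`, blocks are ordered by `j`, and inside a block the order is `mid`, `neg`, `dbl`, `pos`,
with `m` increasing along `neg` and decreasing along `pos`. -/
def Before : Pos → Pos → Prop
  | pre i j, pre i' j' => j < j' ∨ j = j' ∧ i < i'
  | pre _ _, _ => True
  | _, pre _ _ => False
  | mid i j, mid i' j' => j < j' ∨ j = j' ∧ i < i'
  | mid _ j, neg j' _ => j ≤ j'
  | mid _ j, dbl j' => j ≤ j'
  | mid _ j, pos j' _ => j ≤ j'
  | neg j _, mid _ j' => j < j'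
  | neg j m, neg j' m' => j < j' ∨ j = j' ∧ m < m'
  | neg j _, dbl j' => j ≤ j'
  | neg j _, pos j' _ => j ≤ j'
  | dbl j, mid _ j' => j < j'
  | dbl j, neg j' _ => j < j'
  | dbl j, dbl j' => j < j'
  | dbl j, pos j' _ => j ≤ j'
  | pos j _, mid _ j' => j < j'
  | pos j _, neg j' _ => j < j'
  | pos j _, dbl j' => j < j'
  | pos j m, pos j' m' => j < j' ∨ j = j' ∧ m' < m

instance : Std.Irrefl Before := ⟨by rintro (_ | _ | _ | _ | _) <;> simp [Before]⟩

instance : Std.Antisymm Before :=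
  ⟨by rintro (_ | _ | _ | _ | _) (_ | _ | _ | _ | _) <;> simp only [Before] <;> grind⟩

/-- The positions of `Γ_j(k)`, in order. -/
def block (n k j : ℕ) : List Pos :=
  (List.range (j - 1)).map (fun r => mid (r + 1) j)
    ++ (List.range (n - k)).map (fun r => neg j (k + 1 + r))
    ++ [dbl j]
    ++ (List.range (n - k)).map (fun r => pos j (n - r))

/-- The positions of `Γ(k)`, in order. -/
def chain (n k : ℕ) : List Pos :=
  ((List.range (k - 1)).map
      (fun r => (List.range (r + 1)).map (fun i => pre (i + 1) (r + 2)))).flatten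
    ++ ((List.range k).map (fun r => block n k (r + 1))).flatten

theorem map_root_chain (n k : ℕ) : (chain n k).map root = gammaChain n k := by
  simp [chain, block, gammaChain, gammaJK, gammaPrime, List.map_flatten, Function.comp_def, root]

theorem mem_block {n k j : ℕ} (hj : 1 ≤ j) (hjk : j ≤ k) (hk : k ≤ n) (x : Pos) :
    x ∈ block n k j ↔ Valid n k x ∧
      ((∃ i, x = mid i j) ∨ (∃ m, x = neg j m) ∨ x = dbl j ∨ ∃ m, x = pos j m) := by
  simp only [block, List.mem_append, List.mem_map, List.mem_range, List.mem_singleton]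
  constructor
  · rintro (((⟨r, hr, rfl⟩ | ⟨r, hr, rfl⟩) | rfl) | ⟨r, hr, rfl⟩) <;> simp [Valid] <;> omega
  · rintro ⟨hv, ⟨i, rfl⟩ | ⟨m, rfl⟩ | rfl | ⟨m, rfl⟩⟩ <;> simp only [Valid] at hv
    · exact .inl (.inl (.inl ⟨i - 1, by omega, by simp; omega⟩))
    · exact .inl (.inl (.inr ⟨m - (k + 1), by omega, by simp; omega⟩))
    · simp
    · exact .inr ⟨n - m, by omega, by simp; omega⟩

theorem mem_chain {n k : ℕ} (hk : k ≤ n) (x : Pos) : x ∈ chain n k ↔ Valid n k x := by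
  simp only [chain, List.mem_append, List.mem_flatten, List.mem_map, List.mem_range]
  constructor
  · rintro (⟨_, ⟨r, hr, rfl⟩, h⟩ | ⟨_, ⟨r, hr, rfl⟩, h⟩)
    · obtain ⟨i, hi, rfl⟩ := by simpa using h
      simp only [Valid]; omega
    · exact ((mem_block (by omega) (by omega) hk x).1 h).1
  · intro hv
    have key : ∀ j, 1 ≤ j → j ≤ k → x ∈ block n k j →
        ∃ l, (∃ a < k, block n k (a + 1) = l) ∧ x ∈ l := fun j h1 h2 h =>
      ⟨_, ⟨j - 1, by omega, rfl⟩, by rwa [Nat.sub_add_cancel h1]⟩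
    rcases x with ⟨i, j⟩ | ⟨i, j⟩ | ⟨j, m⟩ | j | ⟨j, m⟩ <;> have hv' := hv <;>
      simp only [Valid] at hv'
    · refine .inl ⟨_, ⟨j - 2, by omega, rfl⟩, ?_⟩
      simp only [List.mem_map, List.mem_range]
      exact ⟨i - 1, by omega, by simp; omega⟩
    all_goals
      refine .inr (key j (by omega) (by omega) ((mem_block (by omega) (by omega) hk _).2 ?_))
      exact ⟨hv, by simp⟩

theorem pairwise_range_map {n : ℕ} {f : ℕ → Pos}
    (h : ∀ a b, a < b → b < n → Before (f a) (f b)) :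
    ((List.range n).map f).Pairwise Before := by
  rw [List.pairwise_map]
  exact List.pairwise_lt_range.imp_of_mem fun _ hb hab => h _ _ hab (List.mem_range.1 hb)

theorem pairwise_block {n k j : ℕ} : (block n k j).Pairwise Before := by
  simp only [block, List.pairwise_append, List.mem_append, List.mem_map, List.mem_range,
    List.mem_singleton, List.pairwise_singleton]
  refine ⟨⟨⟨pairwise_range_map ?_, pairwise_range_map ?_, ?_⟩, trivial, ?_⟩,
    pairwise_range_map ?_, ?_⟩
  · intro a b h _; simp [Before]; omega
  · intro a b h _; simp [Before]; omega
  · rintro _ ⟨a, _, rfl⟩ _ ⟨b, _, rfl⟩; simp [Before]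
  · rintro _ (⟨a, _, rfl⟩ | ⟨a, _, rfl⟩) _ rfl <;> simp [Before]
  · intro a b h _; simp [Before]; omega
  · rintro _ ((⟨a, _, rfl⟩ | ⟨a, _, rfl⟩) | rfl) _ ⟨b, _, rfl⟩ <;> simp [Before]

theorem pairwise_chain {n k : ℕ} (hk : k ≤ n) : (chain n k).Pairwise Before := by
  simp only [chain, List.pairwise_append, List.pairwise_flatten, List.pairwise_map]
  refine ⟨⟨?_, ?_⟩, ⟨?_, ?_⟩, ?_⟩
  · simp only [List.forall_mem_map]
    intro r _
    refine pairwise_range_map fun a b h _ => ?_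
    simp [Before]; omega
  · refine List.pairwise_lt_range.imp fun {a b} hab => ?_
    simp only [List.forall_mem_map]
    intro _ _ _ _
    simp only [Before]; omega
  · simp only [List.forall_mem_map]
    exact fun _ _ => pairwise_block
  · refine List.pairwise_lt_range.imp_of_mem fun {a b} ha hb hab x hx y hy => ?_
    rw [List.mem_range] at ha hb
    obtain ⟨-, ⟨_, rfl⟩ | ⟨_, rfl⟩ | rfl | ⟨_, rfl⟩⟩ :=
      (mem_block (by omega) (by omega) hk x).1 hx <;>
    obtain ⟨-, ⟨_, rfl⟩ | ⟨_, rfl⟩ | rfl | ⟨_, rfl⟩⟩ :=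
      (mem_block (by omega) (by omega) hk y).1 hy <;>
    simp only [Before] <;> omega
  · simp only [List.mem_flatten, List.mem_map, List.mem_range]
    rintro _ ⟨_, ⟨a, _, rfl⟩, hx⟩ y ⟨_, ⟨b, hb, rfl⟩, hy⟩
    obtain ⟨i, _, rfl⟩ := by simpa using hx
    obtain ⟨-, ⟨_, rfl⟩ | ⟨_, rfl⟩ | rfl | ⟨_, rfl⟩⟩ :=
      (mem_block (by omega) (by omega) hk y).1 hy <;> simp [Before]

end Pos

open Pos

/-! ### Subsequences and multiplicities -/

/-- A subsequence of `Γ(k)` cut out by a predicate is found by exhibiting any `Before`-sorted list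
of exactly the valid positions satisfying it, since such a list is unique. -/
theorem filter_gammaChain {n k : ℕ} (hk : k ≤ n) (p : ℕ × ℤ → Prop) [DecidablePred p]
    (E : List Pos) (hE : E.Pairwise Before) (hmem : ∀ x, x ∈ E ↔ Valid n k x ∧ p x.root) :
    (gammaChain n k).filter (fun x => decide (p x)) = E.map root := by
  rw [← map_root_chain, List.filter_map]
  congr 1
  refine List.Pairwise.eq_of_mem_iff (r := Before) ((pairwise_chain hk).filter _) hE fun x => ?_
  simp [mem_chain hk, hmem]

theorem count_gammaChain {n k : ℕ} (hk : k ≤ n) (β : ℕ × ℤ)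
    (E : List Pos) (hE : E.Pairwise Before) (hmem : ∀ x, x ∈ E ↔ Valid n k x ∧ x.root = β) :
    (gammaChain n k).count β = E.length := by
  rw [List.count_eq_length_filter]
  have := filter_gammaChain hk (fun x => x = β) E hE hmem
  have h2 := congrArg List.length this
  simpa [beq_eq_decide] using h2

theorem count_pos {n k a b : ℕ} (hk : k ≤ n) (ha : 1 ≤ a) (hab : a < b) (hb : b ≤ n) :
    (gammaChain n k).count (a, (b : ℤ)) = if a ≤ k ∧ k < b then 1 else 0 := by
  split_ifs with h
  · refine count_gammaChain hk _ [pos a b] (by simp) ?_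
    rintro (_ | _ | _ | _ | _) <;> simp [Valid, root] <;> omega
  · refine count_gammaChain hk _ [] (by simp) ?_
    rintro (_ | _ | _ | _ | _) <;> simp [Valid, root] <;> omega

theorem count_neg {n k a b : ℕ} (hk : k ≤ n) (ha : 1 ≤ a) (hab : a < b) (hb : b ≤ n) :
    (gammaChain n k).count (a, -(b : ℤ)) = if b ≤ k then 2 else if a ≤ k then 1 else 0 := by
  split_ifs with h h'
  · refine count_gammaChain hk _ [pre a b, mid a b] (by simp [Before]) ?_
    rintro (_ | _ | _ | _ | _) <;> simp [Valid, root] <;> omega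
  · refine count_gammaChain hk _ [neg a b] (by simp) ?_
    rintro (_ | _ | _ | _ | _) <;> simp [Valid, root] <;> omega
  · refine count_gammaChain hk _ [] (by simp) ?_
    rintro (_ | _ | _ | _ | _) <;> simp [Valid, root] <;> omega

theorem count_dbl {n k a : ℕ} (hk : k ≤ n) (ha : 1 ≤ a) :
    (gammaChain n k).count (a, -(a : ℤ)) = if a ≤ k then 1 else 0 := by
  split_ifs with h
  · refine count_gammaChain hk _ [dbl a] (by simp) ?_
    rintro (_ | _ | _ | _ | _) <;> simp [Valid, root] <;> omega
  · refine count_gammaChain hk _ [] (by simp) ?_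
    rintro (_ | _ | _ | _ | _) <;> simp [Valid, root] <;> omega

theorem altPairs_swap {γ α β : ℕ × ℤ} : ∀ {l : List (ℕ × ℤ)},
    altPairs γ β α l → altPairs γ α β l
  | [] => fun _ => trivial
  | [_] => id
  | _ :: _ :: _ => fun h => ⟨h.1, h.2.1.symm, altPairs_swap h.2.2⟩

/-- Condition (R2) for the triple `(α, β, γ)` and the chain `Γ(k)`. -/
def R2 (n k : ℕ) (γ α β : ℕ × ℤ) : Prop :=
  altPairs γ α β ((gammaChain n k).filter (fun x => decide (x = α ∨ x = β ∨ x = γ)))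

theorem R2.swap {n k : ℕ} {γ α β : ℕ × ℤ} (h : R2 n k γ β α) : R2 n k γ α β := by
  unfold R2 at *
  have : (fun x : ℕ × ℤ => decide (x = α ∨ x = β ∨ x = γ)) =
      fun x => decide (x = β ∨ x = α ∨ x = γ) := by
    funext x; exact decide_eq_decide.2 or_left_comm
  rw [this]
  exact altPairs_swap h

theorem R2.of_list {n k : ℕ} (hk : k ≤ n) {γ α β : ℕ × ℤ} (E : List Pos)
    (hE : E.Pairwise Before)
    (hmem : ∀ x, x ∈ E ↔ Valid n k x ∧ (x.root = α ∨ x.root = β ∨ x.root = γ))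
    (halt : altPairs γ α β (E.map root)) : R2 n k γ α β := by
  unfold R2
  rw [filter_gammaChain hk (fun x => x = α ∨ x = β ∨ x = γ) E hE hmem]
  exact halt

/-! ### (R2) for each kind of triple

The case distinction in each lemma is the location of `k` among the indices of the triple, and
the list supplied is the sequence of positions carrying one of its three roots. -/

theorem R2_plus_dbl_dbl {n k a b : ℕ} (hk : k ≤ n) (ha : 1 ≤ a) (hab : a < b)
    (hb : b ≤ n) : R2 n k (a, -(b : ℤ)) (a, -(a : ℤ)) (b, -(b : ℤ)) := by
  obtain h | h | h : k < a ∨ (a ≤ k ∧ k < b) ∨ b ≤ k := by omega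
  case' inl => refine R2.of_list hk [] ?_ ?_ ?_
  case' inr.inl => refine R2.of_list hk [neg a b, dbl a] ?_ ?_ ?_
  case' inr.inr => refine R2.of_list hk [pre a b, dbl a, mid a b, dbl b] ?_ ?_ ?_
  all_goals try rintro (_ | _ | _ | _ | _)
  all_goals simp [Valid, root, Before, altPairs] <;> omega

theorem R2_dbl_minus_dbl {n k a b : ℕ} (hk : k ≤ n) (ha : 1 ≤ a) (hab : a < b)
    (hb : b ≤ n) : R2 n k (a, -(a : ℤ)) (a, (b : ℤ)) (b, -(b : ℤ)) := by
  obtain h | h | h : k < a ∨ (a ≤ k ∧ k < b) ∨ b ≤ k := by omega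
  case' inl => refine R2.of_list hk [] ?_ ?_ ?_
  case' inr.inl => refine R2.of_list hk [dbl a, pos a b] ?_ ?_ ?_
  case' inr.inr => refine R2.of_list hk [dbl a, dbl b] ?_ ?_ ?_
  all_goals try rintro (_ | _ | _ | _ | _)
  all_goals simp [Valid, root, Before, altPairs] <;> omega

theorem R2_minus_minus_minus {n k a b c : ℕ} (hk : k ≤ n) (ha : 1 ≤ a) (hab : a < b)
    (hbc : b < c) (hc : c ≤ n) :
    R2 n k (a, (c : ℤ)) (a, (b : ℤ)) (b, (c : ℤ)) := by
  obtain h | h | h | h : k < a ∨ (a ≤ k ∧ k < b) ∨ (b ≤ k ∧ k < c) ∨ c ≤ k := by omega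
  case' inl => refine R2.of_list hk [] ?_ ?_ ?_
  case' inr.inl => refine R2.of_list hk [pos a c, pos a b] ?_ ?_ ?_
  case' inr.inr.inl => refine R2.of_list hk [pos a c, pos b c] ?_ ?_ ?_
  case' inr.inr.inr => refine R2.of_list hk [] ?_ ?_ ?_
  all_goals try rintro (_ | _ | _ | _ | _)
  all_goals simp [Valid, root, Before, altPairs] <;> omega

theorem R2_plus_minus_plus_right {n k a b c : ℕ} (hk : k ≤ n) (ha : 1 ≤ a) (hab : a < b)
    (hbc : b < c) (hc : c ≤ n) :
    R2 n k (a, -(c : ℤ)) (a, (b : ℤ)) (b, -(c : ℤ)) := by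
  obtain h | h | h | h : k < a ∨ (a ≤ k ∧ k < b) ∨ (b ≤ k ∧ k < c) ∨ c ≤ k := by omega
  case' inl => refine R2.of_list hk [] ?_ ?_ ?_
  case' inr.inl => refine R2.of_list hk [neg a c, pos a b] ?_ ?_ ?_
  case' inr.inr.inl => refine R2.of_list hk [neg a c, neg b c] ?_ ?_ ?_
  case' inr.inr.inr => refine R2.of_list hk [pre a c, pre b c, mid a c, mid b c] ?_ ?_ ?_
  all_goals try rintro (_ | _ | _ | _ | _)
  all_goals simp [Valid, root, Before, altPairs] <;> omega

theorem R2_plus_minus_plus_mid {n k a b c : ℕ} (hk : k ≤ n) (ha : 1 ≤ a) (hab : a < b)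
    (hbc : b < c) (hc : c ≤ n) :
    R2 n k (a, -(b : ℤ)) (a, (c : ℤ)) (b, -(c : ℤ)) := by
  obtain h | h | h | h : k < a ∨ (a ≤ k ∧ k < b) ∨ (b ≤ k ∧ k < c) ∨ c ≤ k := by omega
  case' inl => refine R2.of_list hk [] ?_ ?_ ?_
  case' inr.inl => refine R2.of_list hk [neg a b, pos a c] ?_ ?_ ?_
  case' inr.inr.inl => refine R2.of_list hk [pre a b, pos a c, mid a b, neg b c] ?_ ?_ ?_
  case' inr.inr.inr => refine R2.of_list hk [pre a b, pre b c, mid a b, mid b c] ?_ ?_ ?_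
  all_goals try rintro (_ | _ | _ | _ | _)
  all_goals simp [Valid, root, Before, altPairs] <;> omega

theorem R2_plus_minus_plus_left {n k a b c : ℕ} (hk : k ≤ n) (ha : 1 ≤ a) (hab : a < b)
    (hbc : b < c) (hc : c ≤ n) :
    R2 n k (a, -(b : ℤ)) (b, (c : ℤ)) (a, -(c : ℤ)) := by
  obtain h | h | h | h : k < a ∨ (a ≤ k ∧ k < b) ∨ (b ≤ k ∧ k < c) ∨ c ≤ k := by omega
  case' inl => refine R2.of_list hk [] ?_ ?_ ?_
  case' inr.inl => refine R2.of_list hk [neg a b, neg a c] ?_ ?_ ?_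
  case' inr.inr.inl => refine R2.of_list hk [pre a b, neg a c, mid a b, pos b c] ?_ ?_ ?_
  case' inr.inr.inr => refine R2.of_list hk [pre a b, pre a c, mid a b, mid a c] ?_ ?_ ?_
  all_goals try rintro (_ | _ | _ | _ | _)
  all_goals simp [Valid, root, Before, altPairs] <;> omega

/-! ### Coroots in coordinates -/

theorem isPosRootC_cases {n : ℕ} {β : ℕ × ℤ} (h : isPosRootC n β) :
    (∃ a b : ℕ, 1 ≤ a ∧ a < b ∧ b ≤ n ∧ β = (a, (b : ℤ))) ∨
    (∃ a b : ℕ, 1 ≤ a ∧ a < b ∧ b ≤ n ∧ β = (a, -(b : ℤ))) ∨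
    (∃ a : ℕ, 1 ≤ a ∧ a ≤ n ∧ β = (a, -(a : ℤ))) := by
  obtain ⟨i, j⟩ := β
  rcases h with ⟨h1, h2, h3⟩ | ⟨h1, h2, h3, h4⟩ <;> simp only at h1 h2 h3
  · exact .inl ⟨i, j.toNat, h1, by omega, by omega, by simp; omega⟩
  · simp only at h4
    rcases h3.lt_or_eq with h | h
    · exact .inr (.inl ⟨i, (-j).toNat, h1, by omega, by omega, by simp; omega⟩)
    · exact .inr (.inr ⟨i, h1, by omega, by simp; omega⟩)

/-- The `m`-th coordinate of `ε_i`, with 1-based coordinates. -/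
def e (i m : ℕ) : ℤ := if m = i then 1 else 0

theorem coroot_pos {n a b : ℕ} (hab : a < b) (r : Fin n) :
    corootVec n (a, (b : ℤ)) r = e a (r + 1) - e b (r + 1) := by
  have h : (b : ℤ) ≠ -(a : ℤ) := by omega
  simp only [corootVec, if_neg h, rootVec, e]
  grind

theorem coroot_neg {n a b : ℕ} (hab : a < b) (r : Fin n) :
    corootVec n (a, -(b : ℤ)) r = e a (r + 1) + e b (r + 1) := by
  have h : -(b : ℤ) ≠ -(a : ℤ) := by omega
  simp only [corootVec, if_neg h, rootVec, e]
  grind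

theorem coroot_dbl {n a : ℕ} (r : Fin n) :
    corootVec n (a, -(a : ℤ)) r = e a (r + 1) := by
  simp only [corootVec, e]
  grind

theorem sum_omegaC_mul_e {n k a : ℕ} (ha : 1 ≤ a) (han : a ≤ n) :
    ∑ r : Fin n, omegaC n k r * e a (r + 1) = if a ≤ k then 1 else 0 := by
  rw [Finset.sum_eq_single (⟨a - 1, by omega⟩ : Fin n)]
  · simp [omegaC, e, Nat.sub_add_cancel ha]
  · intro r _ hr
    have : (r : ℕ) + 1 ≠ a := fun h => hr (Fin.ext (by simp; omega))
    simp [e, this]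
  · simp

theorem ip_coroot_pos {n k a b : ℕ} (ha : 1 ≤ a) (hab : a < b) (hb : b ≤ n) :
    ip n (omegaC n k) (corootVec n (a, (b : ℤ))) =
      (if a ≤ k then 1 else 0) - (if b ≤ k then 1 else 0) := by
  simp only [ip, coroot_pos hab, mul_sub, Finset.sum_sub_distrib]
  rw [sum_omegaC_mul_e ha (by omega), sum_omegaC_mul_e (by omega) hb]

theorem ip_coroot_neg {n k a b : ℕ} (ha : 1 ≤ a) (hab : a < b) (hb : b ≤ n) :
    ip n (omegaC n k) (corootVec n (a, -(b : ℤ))) =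
      (if a ≤ k then 1 else 0) + (if b ≤ k then 1 else 0) := by
  simp only [ip, coroot_neg hab, mul_add, Finset.sum_add_distrib]
  rw [sum_omegaC_mul_e ha (by omega), sum_omegaC_mul_e (by omega) hb]

theorem ip_coroot_dbl {n k a : ℕ} (ha : 1 ≤ a) (han : a ≤ n) :
    ip n (omegaC n k) (corootVec n (a, -(a : ℤ))) = if a ≤ k then 1 else 0 := by
  simp only [ip, coroot_dbl]
  exact sum_omegaC_mul_e ha han

theorem R1_of_root {n k : ℕ} (hk : k ≤ n) {β : ℕ × ℤ} (hβ : isPosRootC n β) :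
    ((gammaChain n k).count β : ℤ) = ip n (omegaC n k) (corootVec n β) := by
  rcases isPosRootC_cases hβ with ⟨a, b, h1, h2, h3, rfl⟩ | ⟨a, b, h1, h2, h3, rfl⟩ |
    ⟨a, h1, h2, rfl⟩
  · rw [ip_coroot_pos h1 h2 h3, count_pos hk h1 h2 h3]
    split_ifs <;> omega
  · rw [ip_coroot_neg h1 h2 h3, count_neg hk h1 h2 h3]
    split_ifs <;> omega
  · rw [ip_coroot_dbl h1 h2, count_dbl hk h1]
    split_ifs <;> simp

/-! ### Classification of the triples -/

/-- The decompositions `ε_g + ε_h = (ε_a - ε_b) + (ε_c + ε_d)`: the index `b` must cancel against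
`c` or `d`, and the surviving index of `ε_c + ε_d` lies above `b`, between `a` and `b`, or
below `a`. -/
theorem R2_minus_plus {n k g h a b c d : ℕ} (hk : k ≤ n)
    (hg : 1 ≤ g) (hgh : g < h) (hh : h ≤ n) (ha : 1 ≤ a) (hab : a < b) (hb : b ≤ n)
    (hc : 1 ≤ c) (hcd : c < d) (hd : d ≤ n)
    (H : ∀ m, 1 ≤ m → m ≤ n → e g m + e h m = e a m - e b m + (e c m + e d m)) :
    R2 n k (g, -(h : ℤ)) (a, (b : ℤ)) (c, -(d : ℤ)) := by
  have H1 := H g hg (by omega)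
  have H2 := H h (by omega) hh
  have H3 := H a ha (by omega)
  have H4 := H b (by omega) hb
  have H5 := H c hc (by omega)
  have H6 := H d (by omega) hd
  have : (g = a ∧ b = c ∧ h = d) ∨ (g = a ∧ h = c ∧ d = b) ∨ (g = c ∧ h = a ∧ d = b) := by
    clear H
    unfold e at *
    grind (splits := 40)
  obtain ⟨rfl, rfl, rfl⟩ | ⟨rfl, rfl, rfl⟩ | ⟨rfl, rfl, rfl⟩ := this
  · exact R2_plus_minus_plus_right hk hg hab hcd hd
  · exact R2_plus_minus_plus_mid hk hg hgh hcd hd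
  · exact R2_plus_minus_plus_left hk hg hgh hab hd

/-- The decompositions `ε_g = (ε_a - ε_b) + ε_c`. -/
theorem R2_minus_dbl {n k g a b c : ℕ} (hk : k ≤ n)
    (hg : 1 ≤ g) (hgn : g ≤ n) (ha : 1 ≤ a) (hab : a < b) (hb : b ≤ n)
    (hc : 1 ≤ c) (hcn : c ≤ n)
    (H : ∀ m, 1 ≤ m → m ≤ n → e g m = e a m - e b m + e c m) :
    R2 n k (g, -(g : ℤ)) (a, (b : ℤ)) (c, -(c : ℤ)) := by
  have H1 := H g hg hgn
  have H2 := H b (by omega) hb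
  have H3 := H a ha (by omega)
  have : g = a ∧ b = c := by
    clear H
    unfold e at *
    grind (splits := 40)
  obtain ⟨rfl, rfl⟩ := this
  exact R2_dbl_minus_dbl hk hg hab hb

/-- (R2) for all triples. Pairing with `ω_n` gives `0`, `2`, `1` on the coroots of `ε_i - ε_j`,
`ε_i + ε_j`, `2ε_i`, which leaves six of the 27 combinations of types; comparing coordinates at
the indices involved then identifies the roots. -/
theorem R2_of_coroot {n k : ℕ} (hk : k ≤ n) {α β γ : ℕ × ℤ} (hα : isPosRootC n α)
    (hβ : isPosRootC n β) (hγ : isPosRootC n γ)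
    (H : ∀ r : Fin n, corootVec n γ r = corootVec n α r + corootVec n β r) :
    R2 n k γ α β := by
  have hsum : ip n (omegaC n n) (corootVec n γ) =
      ip n (omegaC n n) (corootVec n α) + ip n (omegaC n n) (corootVec n β) := by
    simp only [ip, H, mul_add, Finset.sum_add_distrib]
  have lift : ∀ {u v : ℕ → ℤ}, (∀ r : Fin n, u (r + 1) = v (r + 1)) →
      ∀ m, 1 ≤ m → m ≤ n → u m = v m := fun {u v} huv m h1 h2 => by
    simpa [Nat.sub_add_cancel h1] using huv ⟨m - 1, by omega⟩
  rcases isPosRootC_cases hγ with ⟨g, h, hg, hgh, hh, rfl⟩ | ⟨g, h, hg, hgh, hh, rfl⟩ |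
      ⟨g, hg, hgn, rfl⟩ <;>
    rcases isPosRootC_cases hα with ⟨a, b, ha, hab, hb, rfl⟩ | ⟨a, b, ha, hab, hb, rfl⟩ |
      ⟨a, ha, han, rfl⟩ <;>
    rcases isPosRootC_cases hβ with ⟨c, d, hc, hcd, hd, rfl⟩ | ⟨c, d, hc, hcd, hd, rfl⟩ |
      ⟨c, hc, hcn, rfl⟩ <;>
    simp (disch := omega) only [ip_coroot_pos, ip_coroot_neg, ip_coroot_dbl, if_pos] at hsum <;>
    try (exfalso; omega)
  -- The six surviving cases, in the order below: `m = m + m`, `p = m + p`, `p = p + m`,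
  -- `p = d + d`, `d = m + d`, `d = d + m`, where `m`, `p`, `d` are the coroots of
  -- `ε_i - ε_j`, `ε_i + ε_j`, `2ε_i`.
  all_goals simp (disch := omega) only [coroot_pos, coroot_neg, coroot_dbl] at H
  all_goals clear hsum
  · have H' := lift (u := fun m => e g m - e h m)
      (v := fun m => e a m - e b m + (e c m - e d m)) H
    have H1 := H' g hg (by omega)
    have H2 := H' h (by omega) hh
    have H3 := H' a ha (by omega)
    have H4 := H' b (by omega) hb
    have H5 := H' c hc (by omega)
    have H6 := H' d (by omega) hd
    have : (g = a ∧ b = c ∧ d = h) ∨ (g = c ∧ d = a ∧ b = h) := by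
      clear H H' lift hα hβ hγ
      unfold e at *
      grind (splits := 40)
    obtain ⟨rfl, rfl, rfl⟩ | ⟨rfl, rfl, rfl⟩ := this
    · exact R2_minus_minus_minus hk hg hab hcd hd
    · exact (R2_minus_minus_minus hk hg hcd hab hb).swap
  · exact R2_minus_plus hk hg hgh hh ha hab hb hc hcd hd
      (lift (u := fun m => e g m + e h m) (v := fun m => e a m - e b m + (e c m + e d m)) H)
  · exact (R2_minus_plus hk hg hgh hh hc hcd hd ha hab hb
      (lift (u := fun m => e g m + e h m) (v := fun m => e c m - e d m + (e a m + e b m))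
        fun r => (H r).trans (add_comm _ _))).swap
  · have H' := lift (u := fun m => e g m + e h m) (v := fun m => e a m + e c m) H
    have H1 := H' g hg (by omega)
    have H2 := H' h (by omega) hh
    have : (g = a ∧ h = c) ∨ (g = c ∧ h = a) := by
      clear H H' lift hα hβ hγ
      unfold e at *
      grind (splits := 40)
    obtain ⟨rfl, rfl⟩ | ⟨rfl, rfl⟩ := this
    · exact R2_plus_dbl_dbl hk hg hgh hh
    · exact (R2_plus_dbl_dbl hk hg hgh hh).swap
  · exact R2_minus_dbl hk hg hgn ha hab hb hc hcn
      (lift (u := fun m => e g m) (v := fun m => e a m - e b m + e c m) H)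
  · exact (R2_minus_dbl hk hg hgn hc hcd hd ha han
      (lift (u := fun m => e g m) (v := fun m => e c m - e d m + e a m)
        fun r => (H r).trans (add_comm _ _))).swap

/-- Lemma 4.1: `Γ(k)` is an `ω_k`-chain in type `C_n`, i.e.
it satisfies (R1) (with the explicit counts) and (R2). -/
theorem gammaChain_is_omega_chain_C (n k : ℕ) (hk1 : 1 ≤ k) (hk2 : k ≤ n) :
    -- (R1): every positive root `α` occurs exactly `⟨ω_k, α^∨⟩` times
    (∀ β : ℕ × ℤ, isPosRootC n β →
      (((gammaChain n k).count β : ℤ) = ip n (omegaC n k) (corootVec n β))) ∧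
    -- (R1) explicitly:
    (∀ a b : ℕ, 1 ≤ a → a < b → b ≤ n →
      (gammaChain n k).count (a, (b : ℤ)) = (if a ≤ k ∧ k < b then 1 else 0) ∧
      (gammaChain n k).count (a, -(b : ℤ)) =
        (if b ≤ k then 2 else if a ≤ k then 1 else 0)) ∧
    (∀ a : ℕ, 1 ≤ a → a ≤ n →
      (gammaChain n k).count (a, -(a : ℤ)) = (if a ≤ k then 1 else 0)) ∧
    -- (R2):
    (∀ α β γ : ℕ × ℤ, isPosRootC n α → isPosRootC n β → isPosRootC n γ →
      (∀ r : Fin n, corootVec n γ r = corootVec n α r + corootVec n β r) →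
      altPairs γ α β ((gammaChain n k).filter (fun x => decide (x = α ∨ x = β ∨ x = γ)))) := by
  exact ⟨fun _ hβ => R1_of_root hk2 hβ,
    fun _ _ ha hab hb => ⟨count_pos hk2 ha hab hb, count_neg hk2 ha hab hb⟩,
    fun _ ha _ => count_dbl hk2 ha,
    fun _ _ _ hα hβ hγ H => R2_of_coroot hk2 hα hβ hγ H⟩
end HL
end

section
/- In type B_n, for each 1 ≤ k ≤ n the sequence Gamma(k) is an omega_k-chain; equivalently, it satisfies: (R1) every positive root alpha of B_n occurs in Gamma(k) exactly <omega_k, alpha^v> times, where omega_k = epsilon_1 + ... + epsilon_k for k < n and omega_n = (1/2)(epsilon_1 + ... + epsilon_n); and (R2) for every triple (alpha, beta, gamma) of positive roots of B_n with gamma^v = alpha^v + beta^v, the subsequence of Gamma(k) consisting of all occurrences of alpha, beta, and gamma is a concatenation of consecutive pairs, each pair being (gamma, alpha) or (gamma, beta), in some order. -/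
/-!
The chain `Γ(k)` is a concatenation of two halves, `Γ'_1 ⋯ Γ'_k` and (for `k < n`)
`Γ_1(k) ⋯ Γ_k(k)`. Each half consists of distinct roots and is strictly sorted by an explicit
order: `before₁` for the first half, `before₂` for the second. Hence the multiplicity of a root
is the number of halves containing it, and the subsequence formed by given roots is the
concatenation of two short sorted lists (`filter_eq_of_pairwise`).

Writing `ε_{-a} = -ε_a`, the coroot of the symbol `(a, b)` is `ε_a - ε_b`, also for the short
roots `(i, -i)`. Condition (R1) follows by comparing `⟨ω_k, ε_a - ε_b⟩` with the membership
criteria `mem_firstHalf` and `mem_secondHalf`.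

For (R2), a nonzero sum of two signed unit vectors determines its summands, so that, up to
exchanging `α` and `β`, a relation `γ^∨ = α^∨ + β^∨` is one of (`triple_classify`)

* `ε_i - ε_l = (ε_i - ε_j) + (ε_j - ε_l)` with `i < j < l`;
* `ε_i + ε_l = (ε_i - ε_j) + (ε_j + ε_l)` with `i < j` and `l` arbitrary, the cases `l = i` and
  `l = j` being those that involve short roots.

The position of `k` relative to `i`, `j`, `l` determines which of the three roots lie in each
half and in which order, and in every case the result is a sequence of pairs `γα` or `γβ`
(`r2_minus` and `r2_plus`).
-/

open scoped BigOperators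

namespace HL

/-! ### The two halves of the chain -/

/-- The factor `Γ'_1 ⋯ Γ'_k` of the chain `Γ(k)` of type `B`. -/
def firstHalf (k : ℕ) : List (ℕ × ℤ) :=
  ((List.range k).map (fun r => gammaPrimeB (r + 1))).flatten

/-- The factor `Γ_1(k) ⋯ Γ_k(k)` of the chain `Γ(k)`, present only for `k < n`. -/
def secondHalf (n k : ℕ) : List (ℕ × ℤ) :=
  ((List.range k).map (fun r => gammaJK n (r + 1) k)).flatten

/-- The order in which roots occur in `firstHalf`: `(i,-j)` is sorted by `j`, then by `i`. -/
def before₁ (x y : ℕ × ℤ) : Prop := y.2 < x.2 ∨ (x.2 = y.2 ∧ x.1 < y.1)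

/-- The index `j` of the factor `Γ_j(k)` containing the root `x`. -/
def block (k : ℕ) (x : ℕ × ℤ) : ℤ := if x.2 < 0 ∧ -(k : ℤ) ≤ x.2 then -x.2 else x.1

/-- A number increasing along `Γ_j(k)`: the four pieces `(i,-j)`, `(j,-m)`, `(j,-j)`, `(j,m)`
(with `i < j ≤ k < m ≤ n`) take values `i`, `m`, `n + 1`, `2n + 2 - m`. -/
def place (n k : ℕ) (x : ℕ × ℤ) : ℤ :=
  if x.2 = -(x.1 : ℤ) then n + 1
  else if 0 < x.2 then 2 * n + 2 - x.2
  else if -(k : ℤ) ≤ x.2 then x.1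
  else -x.2

/-- The order in which roots occur in `secondHalf`. -/
def before₂ (n k : ℕ) (x y : ℕ × ℤ) : Prop :=
  block k x < block k y ∨ (block k x = block k y ∧ place n k x < place n k y)

theorem gammaChainB_eq (n k : ℕ) :
    gammaChainB n k = firstHalf k ++ (if k = n then [] else secondHalf n k) := rfl

theorem mem_gammaPrime {j : ℕ} {x : ℕ × ℤ} :
    x ∈ gammaPrime j ↔ 1 ≤ x.1 ∧ x.1 < j ∧ x.2 = -(j : ℤ) := by
  obtain ⟨a, b⟩ := x
  simp only [gammaPrime, List.mem_map, List.mem_range, Prod.mk.injEq]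
  constructor
  · rintro ⟨r, hr, rfl, rfl⟩; omega
  · rintro ⟨h1, h2, h3⟩; exact ⟨a - 1, by omega, by omega, by omega⟩

theorem mem_firstHalf {k : ℕ} {x : ℕ × ℤ} :
    x ∈ firstHalf k ↔ 1 ≤ x.1 ∧ (x.1 : ℤ) ≤ -x.2 ∧ -x.2 ≤ k := by
  obtain ⟨a, b⟩ := x
  simp only [firstHalf, gammaPrimeB, List.mem_flatten, List.mem_map, List.mem_range,
    exists_exists_and_eq_and, List.mem_append, mem_gammaPrime, List.mem_singleton, Prod.mk.injEq]
  constructor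
  · rintro ⟨r, hr, h | h⟩ <;> omega
  · rintro ⟨h1, h2, h3⟩
    exact ⟨(-b).toNat - 1, by omega, by omega⟩

theorem mem_gammaJK {n j k : ℕ} (hk : k ≤ n) {x : ℕ × ℤ} :
    x ∈ gammaJK n j k ↔ (1 ≤ x.1 ∧ x.1 < j ∧ x.2 = -(j : ℤ)) ∨
      (x.1 = j ∧ ((k : ℤ) < -x.2 ∧ -x.2 ≤ n ∨ x.2 = -(j : ℤ) ∨ (k : ℤ) < x.2 ∧ x.2 ≤ n)) := by
  obtain ⟨a, b⟩ := x
  simp only [gammaJK, List.mem_append, mem_gammaPrime, List.mem_map, List.mem_range,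
    List.mem_singleton, Prod.mk.injEq]
  constructor
  · rintro (((h | ⟨r, hr, h⟩) | h) | ⟨r, hr, h⟩) <;> omega
  · rintro (h | ⟨h, h' | h' | h'⟩)
    · exact .inl (.inl (.inl h))
    · exact .inl (.inl (.inr ⟨(-b).toNat - (k + 1), by omega, by omega, by omega⟩))
    · exact .inl (.inr ⟨h, h'⟩)
    · exact .inr ⟨n - b.toNat, by omega, by omega, by omega⟩

theorem mem_secondHalf {n k : ℕ} (hk : k ≤ n) {x : ℕ × ℤ} :
    x ∈ secondHalf n k ↔ 1 ≤ x.1 ∧ x.1 ≤ k ∧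
      ((x.1 : ℤ) ≤ -x.2 ∧ -x.2 ≤ n ∨ (k : ℤ) < x.2 ∧ x.2 ≤ n) := by
  obtain ⟨a, b⟩ := x
  simp only [secondHalf, List.mem_flatten, List.mem_map, List.mem_range,
    exists_exists_and_eq_and, mem_gammaJK hk]
  constructor
  · rintro ⟨r, hr, h⟩; omega
  · rintro ⟨h1, h2, h3⟩
    by_cases hb : b < 0 ∧ -b ≤ k
    · exact ⟨(-b).toNat - 1, by omega, by omega⟩
    · exact ⟨a - 1, by omega, by omega⟩

theorem gammaPrime_pairwise (j : ℕ) : (gammaPrime j).Pairwise (fun x y => x.1 < y.1) := by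
  rw [gammaPrime, List.pairwise_map]
  exact List.pairwise_lt_range.imp (by intro a b h; simpa using h)

theorem firstHalf_pairwise (k : ℕ) : (firstHalf k).Pairwise before₁ := by
  rw [firstHalf, List.pairwise_flatten, List.pairwise_map]
  constructor
  · simp only [List.mem_map, forall_exists_index, and_imp, gammaPrimeB]
    rintro _ r - rfl
    rw [List.pairwise_append]
    refine ⟨(gammaPrime_pairwise _).imp_of_mem ?_, by simp, ?_⟩
    · intro a b ha hb h
      rw [mem_gammaPrime] at ha hb
      exact .inr ⟨by omega, h⟩
    · intro a ha b hb
      rw [mem_gammaPrime] at ha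
      obtain rfl := List.mem_singleton.1 hb
      exact .inr ⟨ha.2.2, ha.2.1⟩
  · refine List.pairwise_lt_range.imp ?_
    intro a b hab x hx y hy
    simp only [gammaPrimeB, List.mem_append, mem_gammaPrime, List.mem_singleton,
      Prod.ext_iff] at hx hy
    unfold before₁
    omega

theorem gammaJK_pairwise {n j k : ℕ} (hj : j ≤ k) (hk : k ≤ n) :
    (gammaJK n j k).Pairwise (fun x y => place n k x < place n k y) := by
  have hP : ∀ x ∈ gammaPrime j, place n k x = x.1 := by
    intro x hx
    rw [mem_gammaPrime] at hx
    unfold place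
    split_ifs <;> omega
  have hA : ∀ r < n - k, place n k (j, -((k + 1 + r : ℕ) : ℤ)) = k + 1 + r := by
    intro r hr
    simp only [place]
    split_ifs <;> omega
  have hD : place n k (j, -(j : ℤ)) = n + 1 := by simp [place]
  have hB : ∀ r < n - k, place n k (j, ((n - r : ℕ) : ℤ)) = n + 2 + r := by
    intro r hr
    simp only [place]
    split_ifs <;> omega
  unfold gammaJK
  simp only [List.pairwise_append, List.pairwise_map, List.mem_append, List.mem_map,
    List.mem_range, List.mem_singleton]
  refine ⟨⟨⟨(gammaPrime_pairwise j).imp_of_mem ?_, List.pairwise_lt_range.imp_of_mem ?_, ?_⟩,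
    List.pairwise_singleton _ _, ?_⟩, List.pairwise_lt_range.imp_of_mem ?_, ?_⟩
  · intro a b ha hb h
    rw [hP a ha, hP b hb]; exact_mod_cast h
  · intro a b ha hb h
    rw [hA a (List.mem_range.1 ha), hA b (List.mem_range.1 hb)]; omega
  · rintro a ha _ ⟨r, hr, rfl⟩
    rw [hP a ha, hA r hr]
    rw [mem_gammaPrime] at ha
    omega
  · rintro a (ha | ⟨r, hr, rfl⟩) _ rfl
    · rw [hP a ha, hD]
      rw [mem_gammaPrime] at ha
      omega
    · rw [hA r hr, hD]; omega
  · intro a b ha hb h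
    rw [hB a (List.mem_range.1 ha), hB b (List.mem_range.1 hb)]; omega
  · rintro a ((ha | ⟨r, hr, rfl⟩) | rfl) _ ⟨s, hs, rfl⟩
    · rw [hP a ha, hB s hs]
      rw [mem_gammaPrime] at ha
      omega
    · rw [hA r hr, hB s hs]; omega
    · rw [hD, hB s hs]; omega

theorem block_eq {n j k : ℕ} (hj : 1 ≤ j) (hjk : j ≤ k) (hk : k ≤ n) {x : ℕ × ℤ}
    (hx : x ∈ gammaJK n j k) : block k x = j := by
  rw [mem_gammaJK hk] at hx
  unfold block
  split_ifs <;> omega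

theorem secondHalf_pairwise {n k : ℕ} (hk : k ≤ n) :
    (secondHalf n k).Pairwise (before₂ n k) := by
  rw [secondHalf, List.pairwise_flatten, List.pairwise_map]
  constructor
  · simp only [List.mem_map, List.mem_range, forall_exists_index, and_imp]
    rintro _ r hr rfl
    refine (gammaJK_pairwise (by omega) hk).imp_of_mem ?_
    intro a b ha hb h
    exact .inr ⟨by rw [block_eq (by omega) (by omega) hk ha,
      block_eq (by omega) (by omega) hk hb], h⟩
  · refine List.pairwise_lt_range.imp_of_mem ?_
    intro a b ha hb hab x hx y hy
    rw [List.mem_range] at ha hb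
    left
    rw [block_eq (by omega) (by omega) hk hx, block_eq (by omega) (by omega) hk hy]
    omega

theorem before₁_asymm (x y : ℕ × ℤ) (h : before₁ x y) : ¬ before₁ y x := by
  unfold before₁ at *; omega

theorem before₂_asymm (n k : ℕ) (x y : ℕ × ℤ) (h : before₂ n k x y) : ¬ before₂ n k y x := by
  unfold before₂ at *; omega

/-! ### Reading off subsequences -/

/-- Two lists strictly sorted by the same asymmetric relation and having the same elements
coincide; this identifies a filtered chain with an explicit short list. -/
theorem filter_eq_of_pairwise {R : ℕ × ℤ → ℕ × ℤ → Prop} (hR : ∀ x y, R x y → ¬ R y x)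
    {L l : List (ℕ × ℤ)} {p : ℕ × ℤ → Bool} (hL : L.Pairwise R) (hl : l.Pairwise R)
    (h : ∀ x, x ∈ l ↔ x ∈ L ∧ p x = true) : L.filter p = l := by
  have hne : ∀ {x y}, R x y → x ≠ y := by
    rintro x _ h rfl
    exact hR _ _ h h
  have hperm : (L.filter p).Perm l := by
    rw [List.perm_ext_iff_of_nodup ((hL.filter p).imp hne) (hl.imp hne)]
    intro x
    rw [List.mem_filter, h]
  exact hperm.eq_of_pairwise (fun a b _ _ hab hba => absurd hba (hR a b hab)) (hL.filter p) hl

theorem count_eq_of_pairwise {R : ℕ × ℤ → ℕ × ℤ → Prop} (hR : ∀ x y, R x y → ¬ R y x)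
    {L : List (ℕ × ℤ)} (hL : L.Pairwise R) (x : ℕ × ℤ) [Decidable (x ∈ L)] :
    L.count x = if x ∈ L then 1 else 0 := by
  have hn : L.Nodup := hL.imp (by rintro a _ h rfl; exact hR _ _ h h)
  split_ifs with h
  · exact List.count_eq_one_of_mem hn h
  · exact List.count_eq_zero_of_not_mem h

theorem altPairs_comm (g a b : ℕ × ℤ) : ∀ l, altPairs g a b l → altPairs g b a l
  | [], h => h
  | [_], h => h
  | _ :: _ :: rest, h => ⟨h.1, h.2.1.symm, altPairs_comm g a b rest h.2.2⟩

/-! ### Coroots as sums of signed unit vectors -/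

/-- The coordinate `x` of the signed unit vector `ε_a`, where `ε_{-a} = -ε_a`. -/
def signedUnit (a x : ℤ) : ℤ := (if x = a then 1 else 0) - (if x = -a then 1 else 0)

/-- The coroot of the symbol `(a, b)` is `ε_a - ε_b` in signed notation; in particular
`ε_i - ε_{-i} = 2ε_i` is the coroot of the short root `ε_i`. -/
theorem corootVecB_eq {n : ℕ} (β : ℕ × ℤ) (r : Fin n) :
    corootVecB n β r = signedUnit β.1 ((r : ℕ) + 1) - signedUnit β.2 ((r : ℕ) + 1) := by
  unfold corootVecB signedUnit
  split_ifs with h <;> (try simp only [rootVec]) <;> split_ifs <;> omega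

theorem signedUnit_neg (a x : ℤ) : signedUnit (-a) x = -signedUnit a x := by
  unfold signedUnit; split_ifs <;> omega

theorem signedUnit_neg_right (a x : ℤ) : signedUnit a (-x) = -signedUnit a x := by
  unfold signedUnit; split_ifs <;> omega

theorem signedUnit_self {a : ℤ} (ha : a ≠ 0) : signedUnit a a = 1 := by
  unfold signedUnit; split_ifs <;> omega

theorem signedUnit_cases (a x : ℤ) : (signedUnit a x = 1 ∧ x = a) ∨
    (signedUnit a x = -1 ∧ x = -a) ∨ signedUnit a x = 0 := by
  unfold signedUnit; split_ifs <;> omega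

/-- Unless it vanishes, a sum of two signed unit vectors determines its summands. -/
theorem signedUnit_pair {n : ℕ} {a b c d : ℤ} (ha : a ≠ 0 ∧ |a| ≤ n) (hb : b ≠ 0 ∧ |b| ≤ n)
    (hab : a ≠ -b)
    (h : ∀ x : ℤ, x ≠ 0 → |x| ≤ n →
      signedUnit a x + signedUnit b x = signedUnit c x + signedUnit d x) :
    (a = c ∧ b = d) ∨ (a = d ∧ b = c) := by
  have h1 := h a ha.1 ha.2
  have h2 := h b hb.1 hb.2
  rw [signedUnit_self ha.1] at h1
  rw [signedUnit_self hb.1] at h2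
  have hac : a = c ∨ a = d := by
    have := signedUnit_cases b a
    have := signedUnit_cases c a
    have := signedUnit_cases d a
    omega
  rcases hac with rfl | rfl
  · have := signedUnit_cases d b
    omega
  · have := signedUnit_cases c b
    omega

/-- The symbol of the root `ε_i + ε_l`, or of `ε_i` when `i = l`; either way its coroot
is `ε_i + ε_l`. -/
def plusRoot (i l : ℕ) : ℕ × ℤ := if i ≤ l then (i, -(l : ℤ)) else (l, -(i : ℤ))

/-- The coroot relation `ε_i - ε_l = (ε_i - ε_j) + (ε_j - ε_l)`. -/
def minusTriple (n : ℕ) (α β γ : ℕ × ℤ) : Prop :=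
  ∃ i j l : ℕ, 1 ≤ i ∧ i < j ∧ j < l ∧ l ≤ n ∧
    γ = (i, (l : ℤ)) ∧ α = (i, (j : ℤ)) ∧ β = (j, (l : ℤ))

/-- The coroot relation `ε_i + ε_l = (ε_i - ε_j) + (ε_j + ε_l)`, where `l = i` and `l = j`
are allowed and account for the relations involving coroots of short roots. -/
def plusTriple (n : ℕ) (α β γ : ℕ × ℤ) : Prop :=
  ∃ i j l : ℕ, 1 ≤ i ∧ i < j ∧ j ≤ n ∧ 1 ≤ l ∧ l ≤ n ∧
    γ = plusRoot i l ∧ α = (i, (j : ℤ)) ∧ β = plusRoot j l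

/-- Classification of the relations `γ^∨ = α^∨ + β^∨` in which `ε_{γ.1}` is a summand
of `α^∨`. -/
theorem triple_classify_aux {n : ℕ} {α β γ : ℕ × ℤ} (hα : isPosRootB n α) (hβ : isPosRootB n β)
    (hγ : isPosRootB n γ)
    (h : ∀ x : ℤ, x ≠ 0 → |x| ≤ n → signedUnit γ.1 x - signedUnit γ.2 x =
      (signedUnit α.1 x - signedUnit α.2 x) + (signedUnit β.1 x - signedUnit β.2 x))
    (hc : (α.1 : ℤ) = γ.1 ∨ α.2 = -(γ.1 : ℤ)) :
    minusTriple n α β γ ∨ plusTriple n α β γ ∨ plusTriple n β α γ := by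
  obtain ⟨a, a'⟩ := α
  obtain ⟨b, b'⟩ := β
  obtain ⟨g, g'⟩ := γ
  simp only [isPosRootB, isPosRootC] at *
  have hb1 : (b : ℤ) ≠ 0 ∧ |(b : ℤ)| ≤ n := by rw [abs_le]; omega
  have hb2 : (-b' : ℤ) ≠ 0 ∧ |(-b' : ℤ)| ≤ n := by rw [abs_le]; omega
  rcases hc with hc | hc
  · obtain rfl : a = g := by omega
    have := signedUnit_pair (c := a') (d := -g') hb1 hb2 (by omega) (by
      intro x hx hx'
      have := h x hx hx'
      simp only [signedUnit_neg]
      omega)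
    rcases this with ⟨h1, h2⟩ | ⟨h1, h2⟩
    · obtain rfl : b' = g' := by omega
      subst h1
      by_cases hg : 0 < b'
      · exact .inl ⟨a, b, b'.toNat, by omega, by omega, by omega, by omega,
          by ext <;> simp <;> omega, rfl, by ext <;> simp <;> omega⟩
      · refine .inr (.inl ⟨a, b, (-b').toNat, by omega, by omega, by omega, by omega, by omega,
          ?_, rfl, ?_⟩) <;>
        · rw [plusRoot, if_pos (by omega)]; ext <;> simp <;> omega
    · obtain rfl : a' = -b' := by omega
      obtain rfl : g' = -b := by omega
      by_cases hg : 0 < b'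
      · refine .inr (.inr ⟨b, b'.toNat, a, by omega, by omega, by omega, by omega, by omega,
          ?_, by ext <;> simp <;> omega, ?_⟩)
        · rw [plusRoot]; split_ifs <;> ext <;> simp <;> omega
        · rw [plusRoot]; split_ifs <;> ext <;> simp <;> omega
      · refine .inr (.inl ⟨a, (-b').toNat, b, by omega, by omega, by omega, by omega, by omega,
          ?_, by ext <;> simp <;> omega, ?_⟩)
        · rw [plusRoot]; split_ifs <;> ext <;> simp <;> omega
        · rw [plusRoot]; split_ifs <;> ext <;> simp <;> omega
  · have := signedUnit_pair (c := -(a : ℤ)) (d := -g') hb1 hb2 (by omega) (by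
      intro x hx hx'
      have := h x hx hx'
      rw [hc] at this
      simp only [signedUnit_neg] at this ⊢
      omega)
    omega

theorem triple_classify {n : ℕ} {α β γ : ℕ × ℤ} (hα : isPosRootB n α) (hβ : isPosRootB n β)
    (hγ : isPosRootB n γ)
    (h : ∀ r : Fin n, corootVecB n γ r = corootVecB n α r + corootVecB n β r) :
    (minusTriple n α β γ ∨ plusTriple n α β γ) ∨ (minusTriple n β α γ ∨ plusTriple n β α γ) := by
  have hpos : ∀ x : ℤ, 0 < x → x ≤ n → signedUnit γ.1 x - signedUnit γ.2 x =
      (signedUnit α.1 x - signedUnit α.2 x) + (signedUnit β.1 x - signedUnit β.2 x) := by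
    intro x hx hx'
    have := h ⟨x.toNat - 1, by omega⟩
    simp only [corootVecB_eq] at this
    have e : ((x.toNat - 1 : ℕ) : ℤ) + 1 = x := by omega
    simpa only [e] using this
  have hall : ∀ x : ℤ, x ≠ 0 → |x| ≤ n → signedUnit γ.1 x - signedUnit γ.2 x =
      (signedUnit α.1 x - signedUnit α.2 x) + (signedUnit β.1 x - signedUnit β.2 x) := by
    intro x hx hx'
    rw [abs_le] at hx'
    rcases lt_or_gt_of_ne hx with h0 | h0
    · have := hpos (-x) (by omega) (by omega)
      simp only [signedUnit_neg_right] at this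
      omega
    · exact hpos x h0 hx'.2
  have hcase : ((α.1 : ℤ) = γ.1 ∨ α.2 = -(γ.1 : ℤ)) ∨ ((β.1 : ℤ) = γ.1 ∨ β.2 = -(γ.1 : ℤ)) := by
    unfold isPosRootB isPosRootC at hα hβ hγ
    have := hpos γ.1 (by omega) (by omega)
    rw [signedUnit_self (by omega)] at this
    have := signedUnit_cases γ.2 γ.1
    have := signedUnit_cases α.1 γ.1
    have := signedUnit_cases α.2 γ.1
    have := signedUnit_cases β.1 γ.1
    have := signedUnit_cases β.2 γ.1
    omega
  rcases hcase with hc | hc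
  · rcases triple_classify_aux hα hβ hγ hall hc with h' | h' | h' <;> tauto
  · rcases triple_classify_aux hβ hα hγ
      (fun x hx hx' => by rw [hall x hx hx', add_comm]) hc with h' | h' | h' <;> tauto

/-! ### Condition (R2) -/

/-- To verify (R2) for a triple it suffices to list, in order, its members in each half. -/
theorem altPairs_chain {n k : ℕ} (hk : k ≤ n) {α β γ : ℕ × ℤ} (L₁ L₂ : List (ℕ × ℤ))
    (p₁ : L₁.Pairwise before₁)
    (m₁ : ∀ x, x ∈ L₁ ↔ x ∈ firstHalf k ∧ (x = α ∨ x = β ∨ x = γ))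
    (p₂ : k < n → L₂.Pairwise (before₂ n k))
    (m₂ : k < n → ∀ x, x ∈ L₂ ↔ x ∈ secondHalf n k ∧ (x = α ∨ x = β ∨ x = γ))
    (h₁ : k = n → altPairs γ α β L₁) (h₂ : k < n → altPairs γ α β (L₁ ++ L₂)) :
    altPairs γ α β ((gammaChainB n k).filter (fun x => decide (x = α ∨ x = β ∨ x = γ))) := by
  have e₁ := filter_eq_of_pairwise (p := fun x => decide (x = α ∨ x = β ∨ x = γ))
    before₁_asymm (firstHalf_pairwise k) p₁ (by simpa using m₁)
  rw [gammaChainB_eq, List.filter_append, e₁]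
  split_ifs with h
  · simpa using h₁ h
  · have hlt : k < n := by omega
    rw [filter_eq_of_pairwise (before₂_asymm n k) (secondHalf_pairwise hk) (p₂ hlt)
      (by simpa using m₂ hlt)]
    exact h₂ hlt

theorem r2_minus {n k : ℕ} (hk : k ≤ n) {α β γ : ℕ × ℤ} (h : minusTriple n α β γ) :
    altPairs γ α β ((gammaChainB n k).filter (fun x => decide (x = α ∨ x = β ∨ x = γ))) := by
  obtain ⟨i, j, l, hi, hij, hjl, hl, rfl, rfl, rfl⟩ := h
  have m₁ : ∀ x : ℕ × ℤ, x ∈ ([] : List (ℕ × ℤ)) ↔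
      x ∈ firstHalf k ∧ (x = (i, (j : ℤ)) ∨ x = (j, (l : ℤ)) ∨ x = (i, (l : ℤ))) := by
    rintro ⟨a, b⟩
    simp only [List.not_mem_nil, false_iff, mem_firstHalf, Prod.mk.injEq]
    omega
  by_cases h1 : i ≤ k ∧ k < j
  · refine altPairs_chain hk [] [(i, (l : ℤ)), (i, (j : ℤ))] .nil m₁ ?_ ?_
      (by simp [altPairs]) (by simp [altPairs]) <;> intro hkn
    · simp only [List.pairwise_cons, List.mem_singleton, forall_eq, List.not_mem_nil, before₂,
        block, place]
      refine ⟨?_, by simp⟩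
      split_ifs <;> omega
    · rintro ⟨a, b⟩
      simp only [List.mem_cons, List.not_mem_nil, or_false, mem_secondHalf hk, Prod.mk.injEq]
      omega
  by_cases h2 : j ≤ k ∧ k < l
  · refine altPairs_chain hk [] [(i, (l : ℤ)), (j, (l : ℤ))] .nil m₁ ?_ ?_
      (by simp [altPairs]) (by simp [altPairs]) <;> intro hkn
    · simp only [List.pairwise_cons, List.mem_singleton, forall_eq, List.not_mem_nil, before₂,
        block, place]
      refine ⟨?_, by simp⟩
      split_ifs <;> omega
    · rintro ⟨a, b⟩
      simp only [List.mem_cons, List.not_mem_nil, or_false, mem_secondHalf hk, Prod.mk.injEq]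
      omega
  · refine altPairs_chain hk [] [] .nil m₁ (fun _ => .nil) ?_
      (by simp [altPairs]) (by simp [altPairs])
    rintro hkn ⟨a, b⟩
    simp only [List.not_mem_nil, false_iff, mem_secondHalf hk, Prod.mk.injEq]
    omega

theorem plusRoot_cases (i l : ℕ) : (i ≤ l ∧ plusRoot i l = (i, -(l : ℤ))) ∨
    (l < i ∧ plusRoot i l = (l, -(i : ℤ))) := by
  unfold plusRoot
  split_ifs with h
  · exact .inl ⟨h, rfl⟩
  · exact .inr ⟨by omega, rfl⟩

theorem before₁_plusRoot {i j l : ℕ} (hij : i < j) : before₁ (plusRoot i l) (plusRoot j l) := by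
  unfold before₁
  rcases plusRoot_cases i l with ⟨h, e⟩ | ⟨h, e⟩ <;>
    rcases plusRoot_cases j l with ⟨h', e'⟩ | ⟨h', e'⟩ <;> rw [e, e'] <;>
      simp only [true_and] <;> omega

/-- When both lie in `secondHalf`, `ε_i + ε_l` precedes `ε_j + ε_l` for `i < j`, unless
`l ≤ i ≤ k < j`. In that exceptional case the order is reversed, see `before₂_plusRoot'`. -/
theorem before₂_plusRoot {n k i j l : ℕ} (hi : 1 ≤ i) (hij : i < j)
    (hl : 1 ≤ l) (hln : l ≤ n) (h : ¬ (i ≤ k ∧ k < j ∧ l ≤ i)) (hlk : i ≤ k ∨ l ≤ k) :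
    before₂ n k (plusRoot i l) (plusRoot j l) := by
  unfold before₂
  rcases plusRoot_cases i l with ⟨h, e⟩ | ⟨h, e⟩ <;>
    rcases plusRoot_cases j l with ⟨h', e'⟩ | ⟨h', e'⟩ <;> rw [e, e'] <;>
      simp only [block, place] <;> split_ifs <;> omega

/-- For `l ≤ i` or `k < l`, the root `ε_i + ε_l` lies in the factor `Γ_i(k)`, which ends with the
roots `ε_i - ε_j`. -/
theorem before₂_minus {n k i j l : ℕ} (hi : 1 ≤ i) (hij : i < j) (hj : j ≤ n)
    (hl : 1 ≤ l) (hln : l ≤ n) (h : i ≤ k ∧ k < j) (hil : l ≤ i ∨ k < l) :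
    before₂ n k (plusRoot i l) (i, (j : ℤ)) := by
  unfold before₂
  rcases plusRoot_cases i l with ⟨h, e⟩ | ⟨h, e⟩ <;> rw [e] <;>
      simp only [block, place] <;> split_ifs <;> omega

/-- For `i < l ≤ k`, the root `ε_i + ε_l` lies in the factor `Γ_l(k)`, later than `Γ_i(k)`. -/
theorem before₂_minus' {n k i j l : ℕ} (hi : 1 ≤ i) (hij : i < j)
    (h : i ≤ k ∧ k < j) (hil : i < l ∧ l ≤ k) :
    before₂ n k (i, (j : ℤ)) (plusRoot i l) := by
  unfold before₂
  rcases plusRoot_cases i l with ⟨h, e⟩ | ⟨h, e⟩ <;> rw [e] <;>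
      simp only [block, place] <;> split_ifs <;> omega

theorem before₂_plusRoot' {n k i j l : ℕ} (hi : 1 ≤ i) (hj : j ≤ n)
    (hl : 1 ≤ l) (h : i ≤ k ∧ k < j ∧ l ≤ i) :
    before₂ n k (plusRoot j l) (plusRoot i l) := by
  unfold before₂
  rcases plusRoot_cases i l with ⟨h, e⟩ | ⟨h, e⟩ <;>
    rcases plusRoot_cases j l with ⟨h', e'⟩ | ⟨h', e'⟩ <;> rw [e, e'] <;>
      simp only [block, place] <;> split_ifs <;> omega

theorem mem_and_triple_iff {L : List (ℕ × ℤ)} {x α β γ : ℕ × ℤ} :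
    x ∈ L ∧ (x = α ∨ x = β ∨ x = γ) ↔
      (x = α ∧ α ∈ L) ∨ (x = β ∧ β ∈ L) ∨ (x = γ ∧ γ ∈ L) := by
  constructor
  · rintro ⟨h, rfl | rfl | rfl⟩ <;> tauto
  · rintro (⟨rfl, h⟩ | ⟨rfl, h⟩ | ⟨rfl, h⟩) <;> tauto

theorem plusRoot_mem_firstHalf {k i l : ℕ} (hi : 1 ≤ i) (hl : 1 ≤ l) :
    plusRoot i l ∈ firstHalf k ↔ i ≤ k ∧ l ≤ k := by
  rw [mem_firstHalf]
  rcases plusRoot_cases i l with ⟨h, e⟩ | ⟨h, e⟩ <;> rw [e] <;> dsimp only <;> omega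

theorem plusRoot_mem_secondHalf {n k i l : ℕ} (hk : k ≤ n) (hi : 1 ≤ i) (hin : i ≤ n)
    (hl : 1 ≤ l) (hln : l ≤ n) : plusRoot i l ∈ secondHalf n k ↔ i ≤ k ∨ l ≤ k := by
  rw [mem_secondHalf hk]
  rcases plusRoot_cases i l with ⟨h, e⟩ | ⟨h, e⟩ <;> rw [e] <;> dsimp only <;> omega

/-- A triple `ε_i + ε_l = (ε_i - ε_j) + (ε_j + ε_l)` meets the chain in the sequence
`γβ·γβ` if `j, l ≤ k`, in `γ·αγβ` or `γ·βγα` if `i, l ≤ k < j`, and otherwise in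
at most one pair, which lies in `secondHalf`; for `k = n` only `γβ` in `firstHalf` is left. -/
theorem r2_plus {n k : ℕ} (hk : k ≤ n) {α β γ : ℕ × ℤ} (h : plusTriple n α β γ) :
    altPairs γ α β ((gammaChainB n k).filter (fun x => decide (x = α ∨ x = β ∨ x = γ))) := by
  obtain ⟨i, j, l, hi, hij, hj, hl, hln, rfl, rfl, rfl⟩ := h
  have a₁ : (i, (j : ℤ)) ∉ firstHalf k := by rw [mem_firstHalf]; dsimp only; omega
  have b₁ := plusRoot_mem_firstHalf (k := k) (show 1 ≤ j by omega) hl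
  have c₁ := plusRoot_mem_firstHalf (k := k) hi hl
  have a₂ : (i, (j : ℤ)) ∈ secondHalf n k ↔ i ≤ k ∧ k < j := by
    rw [mem_secondHalf hk]; dsimp only; omega
  have b₂ := plusRoot_mem_secondHalf hk (show 1 ≤ j by omega) hj hl hln
  have c₂ := plusRoot_mem_secondHalf hk hi (show i ≤ n by omega) hl hln
  by_cases h1 : j ≤ k ∧ l ≤ k
  · refine altPairs_chain hk [plusRoot i l, plusRoot j l] [plusRoot i l, plusRoot j l]
      ?_ ?_ ?_ ?_ (by simp [altPairs]) (by simp [altPairs])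
    · simpa using before₁_plusRoot hij
    · intro x
      rw [mem_and_triple_iff, b₁, c₁]
      grind
    · intro _
      simpa using before₂_plusRoot hi hij hl hln (by omega) (by omega)
    · intro _ x
      rw [mem_and_triple_iff, a₂, b₂, c₂]
      grind
  by_cases h2 : i ≤ k ∧ l ≤ k
  · have m₁ : ∀ x : ℕ × ℤ, x ∈ [plusRoot i l] ↔
        x ∈ firstHalf k ∧ (x = (i, (j : ℤ)) ∨ x = plusRoot j l ∨ x = plusRoot i l) := by
      intro x
      rw [mem_and_triple_iff, b₁, c₁]
      grind
    by_cases h3 : l ≤ i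
    · refine altPairs_chain hk [plusRoot i l] [plusRoot j l, plusRoot i l, (i, (j : ℤ))]
        (List.pairwise_singleton _ _) m₁ ?_ ?_ (by omega) (by simp [altPairs])
      · intro _
        have b1 := before₂_plusRoot' (n := n) (k := k) hi hj hl (by omega)
        have b2 := before₂_minus (n := n) (k := k) hi hij hj hl hln (by omega) (by omega)
        have b3 : before₂ n k (plusRoot j l) (i, (j : ℤ)) := by
          unfold before₂ at *; omega
        simp [b1, b2, b3]
      · intro _ x
        rw [mem_and_triple_iff, a₂, b₂, c₂]
        grind
    · refine altPairs_chain hk [plusRoot i l] [(i, (j : ℤ)), plusRoot i l, plusRoot j l]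
        (List.pairwise_singleton _ _) m₁ ?_ ?_ (by omega) (by simp [altPairs])
      · intro _
        have b1 := before₂_plusRoot (n := n) (k := k) hi hij hl hln (by omega) (by omega)
        have b2 := before₂_minus' (n := n) (k := k) hi hij (by omega)
          (show i < l ∧ l ≤ k by omega)
        have b3 : before₂ n k (i, (j : ℤ)) (plusRoot j l) := by
          unfold before₂ at *; omega
        simp [b1, b2, b3]
      · intro _ x
        rw [mem_and_triple_iff, a₂, b₂, c₂]
        grind
  have m₁ : ∀ x : ℕ × ℤ, x ∈ ([] : List (ℕ × ℤ)) ↔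
      x ∈ firstHalf k ∧ (x = (i, (j : ℤ)) ∨ x = plusRoot j l ∨ x = plusRoot i l) := by
    intro x
    rw [mem_and_triple_iff, b₁, c₁]
    grind
  by_cases h3 : k < i ∧ k < l
  · refine altPairs_chain hk [] [] .nil m₁ (fun _ => .nil) ?_
      (by simp [altPairs]) (by simp [altPairs])
    intro _ x
    rw [mem_and_triple_iff, a₂, b₂, c₂]
    grind
  by_cases h4 : i ≤ k ∧ k < j
  · refine altPairs_chain hk [] [plusRoot i l, (i, (j : ℤ))] .nil m₁ ?_ ?_
      (by simp [altPairs]) (by simp [altPairs])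
    · intro _
      simpa using before₂_minus hi hij hj hl hln h4 (by omega)
    · intro _ x
      rw [mem_and_triple_iff, a₂, b₂, c₂]
      grind
  · refine altPairs_chain hk [] [plusRoot i l, plusRoot j l] .nil m₁ ?_ ?_
      (by simp [altPairs]) (by simp [altPairs])
    · intro _
      simpa using before₂_plusRoot hi hij hl hln (by omega) (by omega)
    · intro _ x
      rw [mem_and_triple_iff, a₂, b₂, c₂]
      grind

/-! ### Condition (R1) -/

theorem sum_mul_signedUnit {n : ℕ} (g : ℤ → ℚ) {a : ℤ} (ha : a ≠ 0 ∧ |a| ≤ n) :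
    ∑ r : Fin n, g ((r : ℕ) + 1) * (signedUnit a ((r : ℕ) + 1) : ℚ) =
      if 0 < a then g a else -g (-a) := by
  obtain ⟨h0, h1⟩ := ha
  rw [abs_le] at h1
  have key : ∀ b : ℤ, 0 < b → b ≤ n →
      ∑ r : Fin n, g ((r : ℕ) + 1) * (signedUnit b ((r : ℕ) + 1) : ℚ) = g b := by
    intro b hb hbn
    have e : ((b.toNat - 1 : ℕ) : ℤ) + 1 = b := by omega
    rw [Finset.sum_eq_single (⟨b.toNat - 1, by omega⟩ : Fin n)]
    · simp only [e, signedUnit_self hb.ne']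
      simp
    · intro r _ hr
      have hr' : (r : ℕ) ≠ b.toNat - 1 := fun h => hr (Fin.ext h)
      have : signedUnit b ((r : ℕ) + 1) = 0 := by
        unfold signedUnit; split_ifs <;> omega
      rw [this]; simp
    · simp
  split_ifs with h
  · exact key a h h1.2
  · rw [← key (-a) (by omega) (by omega), ← Finset.sum_neg_distrib]
    refine Finset.sum_congr rfl fun r _ => ?_
    rw [signedUnit_neg]
    push_cast
    ring

/-- The weight `ω_k` as a function of an integer coordinate. -/
def omegaCoord (n k : ℕ) (x : ℤ) : ℚ := if k = n then 1 / 2 else if x ≤ k then 1 else 0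

theorem r1_count {n k : ℕ} (hk : k ≤ n) (β : ℕ × ℤ) (hβ : isPosRootB n β) :
    ((gammaChainB n k).count β : ℚ) =
      ∑ r : Fin n, omegaB n k r * ((corootVecB n β r : ℤ) : ℚ) := by
  have hω : ∀ r : Fin n, omegaB n k r = omegaCoord n k ((r : ℕ) + 1) := by
    intro r
    unfold omegaB omegaCoord
    by_cases h : k = n
    · simp [h]
    · simp only [if_neg h]
      congr 1
      exact propext (by omega)
  classical
  simp only [hω, corootVecB_eq, Int.cast_sub, mul_sub, Finset.sum_sub_distrib]
  unfold isPosRootB isPosRootC at hβ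
  rw [sum_mul_signedUnit _ (by rw [abs_le]; omega), sum_mul_signedUnit _ (by rw [abs_le]; omega),
    if_pos (by omega), gammaChainB_eq, List.count_append,
    count_eq_of_pairwise before₁_asymm (firstHalf_pairwise k)]
  by_cases hkn : k = n
  · simp only [mem_firstHalf, omegaCoord, if_pos hkn, List.count_nil]
    split_ifs <;> first | omega | norm_num
  · simp only [omegaCoord, if_neg hkn,
      count_eq_of_pairwise (before₂_asymm n k) (secondHalf_pairwise hk)]
    simp only [mem_firstHalf, mem_secondHalf hk]
    split_ifs <;> first | omega | norm_num

/-- `Γ(k)` is an `ω_k`-chain in type `B_n`, i.e. it satisfies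
(R1) and (R2) for the root system `B_n` (where the symbol `(i,-i)` denotes the
short root `ε_i`). -/
theorem gammaChain_is_omega_chain_B (n k : ℕ) (hk1 : 1 ≤ k) (hk2 : k ≤ n) :
    -- (R1): every positive root `α` occurs exactly `⟨ω_k, α^∨⟩` times
    (∀ β : ℕ × ℤ, isPosRootB n β →
      (((gammaChainB n k).count β : ℚ) =
        ∑ r : Fin n, omegaB n k r * ((corootVecB n β r : ℤ) : ℚ))) ∧
    -- (R2):
    (∀ α β γ : ℕ × ℤ, isPosRootB n α → isPosRootB n β → isPosRootB n γ →
      (∀ r : Fin n, corootVecB n γ r = corootVecB n α r + corootVecB n β r) →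
      altPairs γ α β ((gammaChainB n k).filter (fun x => decide (x = α ∨ x = β ∨ x = γ)))) := by
  refine ⟨r1_count hk2, ?_⟩
  intro α β γ hα hβ hγ h
  have swap : ∀ x : ℕ × ℤ, (x = α ∨ x = β ∨ x = γ) ↔ (x = β ∨ x = α ∨ x = γ) :=
    fun x => or_left_comm
  rcases triple_classify hα hβ hγ h with (h' | h') | (h' | h')
  · exact r2_minus hk2 h'
  · exact r2_plus hk2 h'
  · simp only [swap]
    exact altPairs_comm _ _ _ _ (r2_minus hk2 h')
  · simp only [swap]
    exact altPairs_comm _ _ _ _ (r2_plus hk2 h')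
end HL
end
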